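/- Let B₊ = {(x',x'') ∈ ℝ^{n−1}×ℝ : |x'|² + |x''|² < 1, x'' > 0} be the open upper half of the unit ball in ℝⁿ and Γ = {(x',x'') ∈ B̄₊ : x'' = 0} its flat face. There exist γ = γ(n) ∈ (0,1) and C = C(n) > 0 such that: if h is harmonic in B₊, h ∈ C¹(B̄₊), |h| ≤ 1 and |∇h| ≤ 1 in B₊, and |h| ≤ ε and |∂h/∂x''| ≤ ε on Γ for some ε > 0, then |h(x)| ≤ C ε^γ for every x in the half-ball (1/3)B₊ = {(x',x'') : |x'|² + |x''|² < 1/9, x'' > 0}. -/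

import Mathlib

noncomputable section

open MeasureTheory Metric Set Filter Asymptotics
open scoped Topology NNReal ENNReal RealInnerProductSpace

namespace NodalNeumann

/-- Euclidean space `ℝⁿ`. -/
abbrev Euc (n : ℕ) : Type := EuclideanSpace ℝ (Fin n)

/-- The first `n` coordinates `y'` of a point `y = (y', y'') ∈ ℝ^{n+1}`. -/
def front {n : ℕ} (y : Euc (n + 1)) : Euc n :=
  (EuclideanSpace.equiv (Fin n) ℝ).symm fun i => y i.castSucc

/-- The last coordinate `y''` of a point `y = (y', y'') ∈ ℝ^{n+1}`. -/
def lastc {n : ℕ} (y : Euc (n + 1)) : ℝ := y (Fin.last n)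

/-- `(v, a) ∈ ℝ^{n+1}` built from `v ∈ ℝⁿ` and `a ∈ ℝ`. -/
def snocVec {n : ℕ} (v : Euc n) (a : ℝ) : Euc (n + 1) :=
  (EuclideanSpace.equiv (Fin (n + 1)) ℝ).symm
    fun i => if h : i = Fin.last n then a else v (i.castPred h)

/-- The Laplacian of `u : ℝⁿ → ℝ`. -/
def laplacian {n : ℕ} (u : Euc n → ℝ) (x : Euc n) : ℝ :=
  ∑ i : Fin n, fderiv ℝ (fun y => fderiv ℝ u y (EuclideanSpace.single i 1)) x
    (EuclideanSpace.single i 1)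

/-- `u` is harmonic on `s`. -/
def HarmonicOn {n : ℕ} (u : Euc n → ℝ) (s : Set (Euc n)) : Prop :=
  ContDiffOn ℝ 2 u s ∧ ∀ x ∈ s, laplacian u x = 0

/-- `ν` is the outward unit normal vector of `Ω` at the boundary point `x`:
it is a unit vector, points out of `Ω`, `-ν` points into `Ω`, and it is
orthogonal to the boundary at `x` (in the little-o sense). -/
def OutwardNormalAt {n : ℕ} (Ω : Set (Euc n)) (x ν : Euc n) : Prop :=
  ‖ν‖ = 1 ∧
  (∀ᶠ t : ℝ in 𝓝[>] (0 : ℝ), x + t • ν ∉ closure Ω) ∧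
  (∀ᶠ t : ℝ in 𝓝[>] (0 : ℝ), x - t • ν ∈ Ω) ∧
  (fun y : Euc n => (⟪ν, y - x⟫)) =o[𝓝[frontier Ω] x] fun y => ‖y - x‖

/-- `ν` is an outward unit normal field of `Ω` along `∂Ω ∩ s`. -/
def OutwardNormalFieldOn {n : ℕ} (Ω : Set (Euc n)) (ν : Euc n → Euc n)
    (s : Set (Euc n)) : Prop :=
  ∀ x ∈ frontier Ω ∩ s, OutwardNormalAt Ω x (ν x)

/-- The homogeneous Neumann boundary condition `∂h/∂ν = 0` on `∂Ω ∩ s`. -/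
def NeumannBC {n : ℕ} (Ω : Set (Euc n)) (ν : Euc n → Euc n) (h : Euc n → ℝ)
    (s : Set (Euc n)) : Prop :=
  ∀ x ∈ frontier Ω ∩ s, DifferentiableWithinAt ℝ h (closure Ω) x ∧
    fderivWithin ℝ h (closure Ω) x (ν x) = 0

/-- `f : ℝⁿ → ℝ` is `C^{1,1}` with character `M`: differentiable with `M`-Lipschitz
derivative (and itself `M`-Lipschitz). -/
def IsC11FunWith {n : ℕ} (M : ℝ≥0) (f : Euc n → ℝ) : Prop :=
  Differentiable ℝ f ∧ LipschitzWith M f ∧ LipschitzWith M fun x => fderiv ℝ f x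

/-- `Ω ∩ B(x,r)` is, after an isometry `T` of `ℝ^{n+1}` with `T 0 = x`, the region
in the ball above the graph of a function `f` with `f 0 = 0` satisfying `P`. -/
def IsGraphBall {n : ℕ} (Ω : Set (Euc (n + 1))) (x : Euc (n + 1)) (r : ℝ)
    (P : (Euc n → ℝ) → Prop) : Prop :=
  ∃ (T : Euc (n + 1) ≃ᵃⁱ[ℝ] Euc (n + 1)) (f : Euc n → ℝ), P f ∧ T 0 = x ∧ f 0 = 0 ∧
    Ω ∩ ball x r =
      ⇑T '' {y : Euc (n + 1) | y ∈ ball (0 : Euc (n + 1)) r ∧ f (front y) < lastc y}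

/-- `∂Ω ∩ B(x,r) ∈ Lip(τ)`. -/
def LipGraphBall {n : ℕ} (Ω : Set (Euc (n + 1))) (x : Euc (n + 1)) (r τ : ℝ) : Prop :=
  IsGraphBall Ω x r fun f => LipschitzWith (Real.toNNReal τ) f

/-- `Ω` is a `C^{1,1}` domain with character `(ρ, M)`. -/
def IsC11DomainWith {n : ℕ} (Ω : Set (Euc (n + 1))) (ρ : ℝ) (M : ℝ≥0) : Prop :=
  IsOpen Ω ∧ IsConnected Ω ∧ 0 < ρ ∧
    ∀ x ∈ frontier Ω, IsGraphBall Ω x ρ (IsC11FunWith M)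

/-- `Ω` is a `C^{1,1}` domain. -/
def IsC11Domain {n : ℕ} (Ω : Set (Euc (n + 1))) : Prop :=
  ∃ (ρ : ℝ) (M : ℝ≥0), IsC11DomainWith Ω ρ M

/-- `Ω` is a Lipschitz domain with character `(ρ, M)`. -/
def IsLipDomainWith {n : ℕ} (Ω : Set (Euc (n + 1))) (ρ : ℝ) (M : ℝ≥0) : Prop :=
  IsOpen Ω ∧ IsConnected Ω ∧ 0 < ρ ∧
    ∀ x ∈ frontier Ω, IsGraphBall Ω x ρ fun f => LipschitzWith M f

/-- The portion `∂Ω ∩ s` of the boundary has `C^{1,1}` character `(ρ, M)`. -/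
def HasC11CharacterOn {n : ℕ} (Ω : Set (Euc (n + 1))) (s : Set (Euc (n + 1)))
    (ρ : ℝ) (M : ℝ≥0) : Prop :=
  0 < ρ ∧ ∀ x ∈ frontier Ω ∩ s, IsGraphBall Ω x ρ (IsC11FunWith M)

/-- `H_h(x,r) = ∫_{B(x,r) ∩ Ω} h²`. -/
def Hfun {n : ℕ} (Ω : Set (Euc n)) (h : Euc n → ℝ) (x : Euc n) (r : ℝ) : ℝ :=
  ∫ y in ball x r ∩ Ω, h y ^ 2

/-- The doubling index `N_h(x,r) = log (H_h(x,2r) / H_h(x,r))`. -/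
def Nfun {n : ℕ} (Ω : Set (Euc n)) (h : Euc n → ℝ) (x : Euc n) (r : ℝ) : ℝ :=
  Real.log (Hfun Ω h x (2 * r) / Hfun Ω h x r)

/-- Closed axis-parallel cube with centre `c` and side length `s`. -/
def cube {n : ℕ} (c : Euc n) (s : ℝ) : Set (Euc n) :=
  {y : Euc n | ∀ i, |y i - c i| ≤ s / 2}

/-- Maximal doubling index `N*_h(Q)` over the cube of centre `c` and side `s`
(whose diameter is `√n · s`). -/
def Nstar {n : ℕ} (Ω : Set (Euc n)) (h : Euc n → ℝ) (c : Euc n) (s : ℝ) : ℝ :=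
  sSup {N : ℝ | ∃ x ∈ cube c s ∩ closure Ω, ∃ r : ℝ,
    0 < r ∧ r ≤ Real.sqrt n * s ∧ N = Nfun Ω h x r}

/-- The nodal set `Z(h) = {x ∈ Ω : h x = 0}`. -/
def zeroSet {n : ℕ} (Ω : Set (Euc n)) (h : Euc n → ℝ) : Set (Euc n) :=
  {x ∈ Ω | h x = 0}

/-- `sup_s g`. -/
def supOn {α : Type*} (g : α → ℝ) (s : Set α) : ℝ := sSup (g '' s)

/-- The open cylinder `S(x,r,t)` of radius `r` and height `t` whose lower face is
centred at `x`. -/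
def cyl {n : ℕ} (x : Euc (n + 1)) (r t : ℝ) : Set (Euc (n + 1)) :=
  {y : Euc (n + 1) | ‖front y - front x‖ < r ∧ 0 < lastc y - lastc x ∧
    lastc y - lastc x < t}

/-- In the chosen coordinates (centred at `x`, with `e_n = -ν(x)`), `Ω ∩ B(x,R)`
is the region above the graph of the `τ`-Lipschitz function `f` with `f 0 = 0`. -/
def AlignedLipGraphOn {n : ℕ} (Ω : Set (Euc (n + 1))) (x : Euc (n + 1)) (R τ : ℝ)
    (f : Euc n → ℝ) : Prop :=
  LipschitzWith (Real.toNNReal τ) f ∧ f 0 = 0 ∧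
    Ω ∩ ball x R = {y ∈ ball x R | f (front (y - x)) < lastc (y - x)}

/-- `z` is the centre of one of the boundary cubes `q ∈ 𝓑_k(Q)` of the standard
construction for the cube `Q` of centre `xQ` and side `s`: the projection of `z` is
the centre of one of the `2^{k·n}` subcubes of side `s/2^k` of the projection of
`Q`, and `z` lies on `∂Ω`. The cube `q` itself is `cube z (s/2^k)`. -/
def IsBdryCubeCenter {n : ℕ} (Ω : Set (Euc (n + 1))) (xQ : Euc (n + 1)) (s : ℝ)
    (k : ℕ) (z : Euc (n + 1)) : Prop :=
  z ∈ frontier Ω ∧ ∃ a : Fin n → ℕ, (∀ i, a i < 2 ^ k) ∧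
    ∀ i : Fin n, z i.castSucc = xQ i.castSucc - s / 2 + ((a i : ℝ) + 1 / 2) * (s / 2 ^ k)

/-- The infinite cylinder `Ω₀ × ℝ ⊂ ℝ^{n+1}` over `Ω₀ ⊂ ℝⁿ`. -/
def prodDomain {n : ℕ} (Ω₀ : Set (Euc n)) : Set (Euc (n + 1)) :=
  {y : Euc (n + 1) | front y ∈ Ω₀}

/-- The harmonic extension `h(x,t) = e^{√λ t} u(x)` of `u` to `Ω₀ × ℝ`. -/
def hExt {n : ℕ} (lam : ℝ) (u : Euc n → ℝ) : Euc (n + 1) → ℝ :=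
  fun y => Real.exp (Real.sqrt lam * lastc y) * u (front y)


/-- The open upper unit half-ball `B₊ ⊂ ℝ^{n+1}`. -/
def unitHalfBall (n : ℕ) : Set (Euc (n + 1)) :=
  {y : Euc (n + 1) | ‖y‖ < 1 ∧ 0 < lastc y}

/-- The flat face `Γ = {(x',x'') ∈ B̄₊ : x'' = 0}` of the upper half-ball. -/
def flatFace (n : ℕ) : Set (Euc (n + 1)) :=
  {y : Euc (n + 1) | ‖y‖ ≤ 1 ∧ lastc y = 0}

lemma exists_phi (p : ℝ) : ∃ φ : ℂ → ℂ, ∀ ζ ∈ Complex.slitPlane,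
    HasDerivAt φ (ζ ^ (-(p : ℂ))) ζ := by
  by_cases hp : p = 1
  · refine ⟨Complex.log, fun ζ hζ => ?_⟩
    have := Complex.hasDerivAt_log hζ
    subst hp
    simpa [Complex.cpow_neg_one] using this
  · refine ⟨fun ζ => ζ ^ ((1 - p : ℝ) : ℂ) / ((1 - p : ℝ) : ℂ), fun ζ hζ => ?_⟩
    have h1 : ((1 - p : ℝ) : ℂ) ≠ 0 := by
      rw [Ne, Complex.ofReal_eq_zero]
      intro h; apply hp; linarith
    have := ((hasDerivAt_id ζ).cpow_const (c := ((1 - p : ℝ) : ℂ)) hζ).div_const ((1 - p : ℝ) : ℂ)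
    have e : ((1 - p : ℝ) : ℂ) * id ζ ^ (((1 - p : ℝ) : ℂ) - 1) * 1 / ((1 - p : ℝ) : ℂ)
        = ζ ^ (-(p : ℂ)) := by
      rw [id, mul_one, mul_div_assoc, mul_comm, div_mul_cancel₀ _ h1]
      congr 1
      push_cast; ring
    rw [e] at this
    exact this

lemma three_circles (b : ℝ) (hb : 0 < b) (hb1 : b < 1) : ∃ γ : ℝ, 0 < γ ∧ γ < 1 ∧ ∃ C : ℝ, 0 < C ∧
    ∀ (f : ℂ → ℂ) (η : ℝ), 0 < η → DifferentiableOn ℂ f (ball 0 1) →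
      (∀ w ∈ ball (0 : ℂ) 1, ‖f w‖ ≤ 1) → (∀ w ∈ ball (0 : ℂ) b, ‖f w‖ ≤ η) →
      ∀ w : ℂ, ‖w‖ ≤ 95 / 100 → ‖f w‖ ≤ C * η ^ γ := by
  set β := b / 2 with hβ
  have hβ0 : 0 < β := by positivity
  have hβ1 : β < 1 / 2 := by rw [hβ]; linarith
  have hlb : Real.log β < 0 := Real.log_neg hβ0 (by linarith)
  have hl2 : Real.log β < - Real.log (102/100) := by
    rw [← Real.log_inv]; exact Real.log_lt_log hβ0 (by norm_num; linarith)
  have hl3 : 0 < Real.log (102/100) := Real.log_pos (by norm_num)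
  set γ := Real.log (102/100) / (- Real.log β) with hγ
  have hγ0 : 0 < γ := div_pos hl3 (by linarith)
  have hγ1 : γ < 1 := by rw [hγ, div_lt_one (by linarith)]; linarith
  have hβγ : (β⁻¹) ^ γ = 102/100 := by
    rw [Real.rpow_def_of_pos (by positivity), Real.log_inv, hγ,
      mul_div_cancel₀ _ (by linarith : - Real.log β ≠ 0), Real.exp_log (by norm_num)]
  set q : ℝ := 95/100 * (100/99 * (102/100)) with hq
  have hq1 : q < 1 := by norm_num [hq]
  have hq0 : 0 ≤ q := by norm_num [hq]
  refine ⟨γ, hγ0, hγ1, (1 - q)⁻¹, by rw [inv_pos]; linarith, ?_⟩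
  intro f η hη hf h1 h2 w hw
  have key : ∀ k : ℕ, ‖iteratedDeriv k f 0‖ / k.factorial ≤ (100/99 * (102/100)) ^ k * η ^ γ := by
    intro k
    have hk : (0:ℝ) < k.factorial := by positivity
    set c := ‖iteratedDeriv k f 0‖ / k.factorial with hc
    have hc0 : 0 ≤ c := by positivity
    have hdc : ∀ R : ℝ, R < 1 → DiffContOnCl ℂ f (ball 0 R) := fun R hR =>
      (hf.mono (closedBall_subset_ball hR)).diffContOnCl_ball subset_rfl
    have e1 : c ≤ (100/99) ^ k := by
      have := Complex.norm_iteratedDeriv_le_of_forall_mem_sphere_norm_le (c := 0) (R := 99/100)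
        (C := 1) k (by norm_num) (hdc _ (by norm_num)) (fun z hz => h1 z (by
          rw [mem_sphere_zero_iff_norm] at hz; rw [mem_ball_zero_iff, hz]; norm_num))
      rw [hc, div_le_iff₀ hk]
      refine this.trans (le_of_eq ?_)
      rw [div_eq_mul_inv, ← inv_pow]; norm_num; ring
    have e2 : c ≤ η * (β⁻¹) ^ k := by
      have := Complex.norm_iteratedDeriv_le_of_forall_mem_sphere_norm_le (c := 0) (R := β)
        (C := η) k hβ0 (hdc _ (by linarith)) (fun z hz => h2 z (by
          rw [mem_sphere_zero_iff_norm] at hz; rw [mem_ball_zero_iff, hz]; linarith))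
      rw [hc, div_le_iff₀ hk]
      refine this.trans (le_of_eq ?_)
      rw [div_eq_mul_inv, ← inv_pow]; ring
    calc c = c ^ (1 - γ) * c ^ γ := by
            rcases hc0.eq_or_lt with h | h
            · rw [← h, Real.zero_rpow hγ0.ne', mul_zero]
            · rw [← Real.rpow_add h]; simp
      _ ≤ (100/99) ^ k * (η * (β⁻¹) ^ k) ^ γ := by
            apply mul_le_mul _ (Real.rpow_le_rpow hc0 e2 hγ0.le) (by positivity) (by positivity)
            calc c ^ (1 - γ) ≤ ((100/99 : ℝ) ^ k) ^ (1 - γ) :=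
                  Real.rpow_le_rpow hc0 e1 (by linarith)
              _ ≤ ((100/99 : ℝ) ^ k) ^ (1:ℝ) := by
                  apply Real.rpow_le_rpow_of_exponent_le _ (by linarith)
                  exact one_le_pow₀ (by norm_num)
              _ = _ := Real.rpow_one _
      _ = _ := by
            rw [Real.mul_rpow hη.le (by positivity), ← Real.rpow_natCast (β⁻¹) k,
              ← Real.rpow_mul (by positivity), mul_comm (k:ℝ) γ, Real.rpow_mul (by positivity),
              hβγ, Real.rpow_natCast, mul_pow]
            ring
  have hsum := Complex.hasSum_taylorSeries_on_ball hf (z := w) (by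
    rw [mem_ball_zero_iff]; linarith)
  have hg : HasSum (fun k : ℕ => q ^ k * η ^ γ) ((1 - q)⁻¹ * η ^ γ) :=
    (hasSum_geometric_of_lt_one hq0 hq1).mul_right _
  rw [← hsum.tsum_eq]
  refine tsum_of_norm_bounded hg fun k => ?_
  rw [norm_smul, norm_smul, sub_zero, norm_pow, norm_inv, Complex.norm_natCast]
  calc _ = ‖w‖ ^ k * (‖iteratedDeriv k f 0‖ / k.factorial) := by
        rw [div_eq_inv_mul]; ring
    _ ≤ (95/100) ^ k * ((100/99 * (102/100)) ^ k * η ^ γ) := by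
        gcongr
        exact key k
    _ = _ := by rw [hq, mul_pow (95/100 : ℝ)]; ring

/-- Zero integral of a compactly supported line derivative. -/
lemma zero_integral {E : Type*} [NormedAddCommGroup E] [NormedSpace ℝ E] [FiniteDimensional ℝ E]
    [MeasurableSpace E] [BorelSpace E] {μ : Measure E} [μ.IsAddHaarMeasure]
    {U K : Set E} (hU : IsOpen U) (hK : IsCompact K) (hKU : K ⊆ U) {g g' : E → ℂ} {v : E}
    (hg : ContinuousOn g U) (hg' : ContinuousOn g' U)
    (h0 : ∀ z ∈ U, z ∉ K → g z = 0) (h0' : ∀ z ∈ U, z ∉ K → g' z = 0)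
    (hd : ∀ z ∈ U, HasLineDerivAt ℝ g (g' z) z v) :
    IntegrableOn g' U μ ∧ ∫ z in U, g' z ∂μ = 0 := by
  have ext : ∀ f : E → ℂ, ContinuousOn f U → (∀ z ∈ U, z ∉ K → f z = 0) →
      Integrable (U.indicator f) μ := by
    intro f hf hf0
    have hz : ∀ z ∉ K, U.indicator f z = 0 := by
      intro z hz
      by_cases hzU : z ∈ U
      · rw [indicator_of_mem hzU]; exact hf0 z hzU hz
      · exact indicator_of_notMem hzU _
    have hc : Continuous (U.indicator f) := by
      rw [continuous_iff_continuousAt]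
      intro z
      by_cases hzU : z ∈ U
      · exact (hf.continuousAt (hU.mem_nhds hzU)).congr
          (mem_of_superset (hU.mem_nhds hzU) fun y hy => (indicator_of_mem hy f).symm)
      · have : Kᶜ ∈ 𝓝 z := hK.isClosed.isOpen_compl.mem_nhds fun h => hzU (hKU h)
        exact (continuousAt_const (y := (0:ℂ))).congr (mem_of_superset this fun y hy => (hz y hy).symm)
    exact hc.integrable_of_hasCompactSupport (HasCompactSupport.intro hK hz)
  have i1 := ext g hg h0
  have i2 := ext g' hg' h0'
  refine ⟨(integrable_indicator_iff hU.measurableSet).1 i2, ?_⟩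
  rw [← integral_indicator hU.measurableSet]
  have := integral_bilinear_hasLineDerivAt_right_eq_neg_left_of_integrable (μ := μ)
    (f := fun _ => (1:ℂ)) (f' := fun _ => 0) (g := U.indicator g) (g' := U.indicator g') (v := v)
    (B := ContinuousLinearMap.mul ℝ ℂ) (by simp) (by simpa using i2) (by simpa using i1)
    (fun x _ => by simpa using (hasFDerivAt_const (𝕜 := ℝ) (1:ℂ) x).hasLineDerivAt v) ?_
  · simpa using this
  · intro z _
    by_cases hzU : z ∈ U
    · rw [indicator_of_mem hzU]
      refine (hd z hzU).congr_of_eventuallyEq ?_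
      filter_upwards [hU.mem_nhds hzU] with y hy using indicator_of_mem hy g
    · rw [indicator_of_notMem hzU]
      have : Kᶜ ∈ 𝓝 z := hK.isClosed.isOpen_compl.mem_nhds fun h => hzU (hKU h)
      have h2 : HasLineDerivAt ℝ (fun _ : E => (0:ℂ)) 0 z v := by
        simpa using (hasFDerivAt_const (𝕜 := ℝ) (0:ℂ) z).hasLineDerivAt v
      refine h2.congr_of_eventuallyEq ?_
      filter_upwards [this] with y hy
      by_cases hyU : y ∈ U
      · rw [indicator_of_mem hyU]; exact h0 y hyU hy
      · exact indicator_of_notMem hyU _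


lemma lastc_line {n : ℕ} (z : Euc (n+1)) (s : ℝ) (i : Fin (n+1)) :
    lastc (z + s • EuclideanSpace.single i (1:ℝ)) =
      lastc z + s * (if i = Fin.last n then 1 else 0) := by
  simp only [lastc, PiLp.add_apply, PiLp.smul_apply, PiLp.single_apply, smul_eq_mul]
  congr 2
  simp [eq_comm]

lemma continuous_lastc {n : ℕ} : Continuous (lastc : Euc (n+1) → ℝ) := by
  unfold lastc; fun_prop

lemma isOpen_half (n : ℕ) : IsOpen (unitHalfBall n) :=
  (isOpen_lt continuous_norm continuous_const).inter (isOpen_lt continuous_const continuous_lastc)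

lemma convex_half (n : ℕ) : Convex ℝ (unitHalfBall n) := by
  have h1 : Convex ℝ {y : Euc (n+1) | ‖y‖ < 1} := by
    simpa [ball, dist_zero_right] using convex_ball (0 : Euc (n+1)) 1
  refine h1.inter ?_
  intro x hx y hy a b ha hb hab
  have hx : 0 < lastc x := hx
  have hy : 0 < lastc y := hy
  show 0 < lastc (a • x + b • y)
  have e : lastc (a • x + b • y) = a * lastc x + b * lastc y := by
    simp [lastc]
  rw [e]
  rcases ha.eq_or_lt with h | h
  · subst h; simp at hab; subst hab; simpa using hy
  · have := mul_pos h hx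
    have := mul_nonneg hb hy.le
    linarith

lemma half_nonempty (n : ℕ) : (unitHalfBall n).Nonempty :=
  ⟨EuclideanSpace.single (Fin.last n) (1/2), by
    constructor
    · simp; norm_num
    · simp [lastc]⟩

lemma closure_half_subset (n : ℕ) : closure (unitHalfBall n) ⊆ {y | ‖y‖ ≤ 1 ∧ 0 ≤ lastc y} := by
  apply closure_minimal
  · intro y hy; exact ⟨hy.1.le, hy.2.le⟩
  · exact (isClosed_le continuous_norm continuous_const).inter
      (isClosed_le continuous_const continuous_lastc)

/-- A function small on the flat face is small in a thin layer. -/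
lemma layer_small {n : ℕ} {g : Euc (n+1) → ℝ} (hg : ContinuousOn g (closure (unitHalfBall n)))
    {ε : ℝ} (hε : 0 < ε) (h0 : ∀ y ∈ flatFace n, |g y| ≤ ε) :
    ∃ δ > 0, ∀ y ∈ unitHalfBall n, lastc y ≤ δ → |g y| ≤ 2 * ε := by
  have hcl : IsCompact (closure (unitHalfBall n)) :=
    isCompact_of_isClosed_isBounded isClosed_closure
      ((isBounded_closedBall (x := (0 : Euc (n+1))) (r := 1)).subset fun y hy => by
        simpa using (closure_half_subset n hy).1)
  have hK : IsCompact {y ∈ closure (unitHalfBall n) | 2 * ε ≤ |g y|} := by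
    obtain ⟨u, hu, hu2⟩ := continuousOn_iff_isClosed.1 hg.abs (Ici (2*ε)) isClosed_Ici
    have : {y ∈ closure (unitHalfBall n) | 2 * ε ≤ |g y|} = closure (unitHalfBall n) ∩ u := by
      rw [inter_comm, ← hu2, inter_comm]; rfl
    rw [this]
    exact hcl.inter_right hu
  by_cases hne : ({y ∈ closure (unitHalfBall n) | 2 * ε ≤ |g y|}).Nonempty
  · obtain ⟨y0, hy0, hmin⟩ := hK.exists_isMinOn hne continuous_lastc.continuousOn
    have hpos : 0 < lastc y0 := by
      have hb := closure_half_subset n hy0.1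
      rcases hb.2.eq_or_lt with h | h
      · have := h0 y0 ⟨hb.1, h.symm⟩
        have := hy0.2
        linarith
      · exact h
    refine ⟨lastc y0 / 2, by positivity, fun y hy hyl => ?_⟩
    by_contra hcon
    have := hmin (show y ∈ {y ∈ closure (unitHalfBall n) | 2 * ε ≤ |g y|} from
      ⟨subset_closure hy, (not_le.1 hcon).le⟩)
    have : lastc y0 ≤ lastc y := this
    linarith
  · refine ⟨1, one_pos, fun y hy _ => ?_⟩
    by_contra hcon
    exact hne ⟨y, subset_closure hy, (not_le.1 hcon).le⟩

lemma layer_volume (n : ℕ) (δ : ℝ) (hδ : 0 ≤ δ) :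
    volume {z : Euc (n+1) | ‖z‖ ≤ 1 ∧ 0 ≤ lastc z ∧ lastc z ≤ δ} ≤ ENNReal.ofReal (2 ^ n * δ) := by
  let lo : Fin (n+1) → ℝ := fun i => if i = Fin.last n then 0 else -1
  let hi : Fin (n+1) → ℝ := fun i => if i = Fin.last n then δ else 1
  have hsub : {z : Euc (n+1) | ‖z‖ ≤ 1 ∧ 0 ≤ lastc z ∧ lastc z ≤ δ} ⊆
      (WithLp.ofLp (p := 2)) ⁻¹' (Icc lo hi) := by
    intro z hz
    have hc : ∀ i, |z i| ≤ 1 := fun i => (by simpa using (PiLp.norm_apply_le z i).trans hz.1)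
    simp only [mem_preimage, mem_Icc, Pi.le_def, lo, hi]
    refine ⟨fun i => ?_, fun i => ?_⟩
    · split_ifs with h
      · subst h; exact hz.2.1
      · exact (abs_le.1 (hc i)).1
    · split_ifs with h
      · subst h; exact hz.2.2
      · exact (abs_le.1 (hc i)).2
  refine (measure_mono hsub).trans ?_
  rw [(PiLp.volume_preserving_ofLp (Fin (n+1))).measure_preimage measurableSet_Icc.nullMeasurableSet,
    Real.volume_Icc_pi, ← ENNReal.ofReal_prod_of_nonneg, Fin.prod_univ_castSucc]
  · apply ENNReal.ofReal_le_ofReal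
    simp [lo, hi, Fin.ext_iff, Fin.val_last, (Fin.is_lt _).ne]
    norm_num
  · intro i _
    simp only [lo, hi]
    split_ifs
    · linarith
    · norm_num

lemma exists_smoothTransition_bound : ∃ B : ℝ, 0 < B ∧ (∀ s, |deriv Real.smoothTransition s| ≤ B) ∧
    ∀ s, (s < 0 ∨ 1 < s) → deriv Real.smoothTransition s = 0 := by
  have hc : Continuous (deriv Real.smoothTransition) :=
    (Real.smoothTransition.contDiff (n := 1)).continuous_deriv le_rfl
  have hz : ∀ s, (s < 0 ∨ 1 < s) → deriv Real.smoothTransition s = 0 := by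
    rintro s (hs | hs)
    · have : Real.smoothTransition =ᶠ[𝓝 s] fun _ => 0 := by
        filter_upwards [Iio_mem_nhds hs] with y hy
        exact Real.smoothTransition.zero_of_nonpos (le_of_lt hy)
      rw [this.deriv_eq]; simp
    · have : Real.smoothTransition =ᶠ[𝓝 s] fun _ => 1 := by
        filter_upwards [Ioi_mem_nhds hs] with y hy
        exact Real.smoothTransition.one_of_one_le (le_of_lt hy)
      rw [this.deriv_eq]; simp
  obtain ⟨B, hB⟩ := isCompact_Icc.exists_bound_of_continuousOn (s := Icc (0:ℝ) 1) hc.continuousOn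
  refine ⟨|B| + 1, by positivity, fun s => ?_, hz⟩
  by_cases hs : s ∈ Icc (0:ℝ) 1
  · have := hB s hs
    rw [Real.norm_eq_abs] at this
    linarith [le_abs_self B]
  · rw [hz s (by by_contra hh; push Not at hh; exact hs hh), abs_zero]; positivity



section ld
variable {E : Type*} [NormedAddCommGroup E] [NormedSpace ℝ E]

lemma ld_mul {f g : E → ℂ} {f' g' : ℂ} {x v : E} (hf : HasLineDerivAt ℝ f f' x v)
    (hg : HasLineDerivAt ℝ g g' x v) :
    HasLineDerivAt ℝ (fun z => f z * g z) (f' * g x + f x * g') x v := by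
  have h := HasDerivAt.mul (show HasDerivAt (fun t : ℝ => f (x + t • v)) f' 0 from hf)
    (show HasDerivAt (fun t : ℝ => g (x + t • v)) g' 0 from hg)
  simp only [zero_smul, add_zero] at h
  exact h

lemma ld_add {f g : E → ℂ} {f' g' : ℂ} {x v : E} (hf : HasLineDerivAt ℝ f f' x v)
    (hg : HasLineDerivAt ℝ g g' x v) :
    HasLineDerivAt ℝ (fun z => f z + g z) (f' + g') x v :=
  HasDerivAt.add (show HasDerivAt (fun t : ℝ => f (x + t • v)) f' 0 from hf)
    (show HasDerivAt (fun t : ℝ => g (x + t • v)) g' 0 from hg)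

lemma ld_sub {f g : E → ℂ} {f' g' : ℂ} {x v : E} (hf : HasLineDerivAt ℝ f f' x v)
    (hg : HasLineDerivAt ℝ g g' x v) :
    HasLineDerivAt ℝ (fun z => f z - g z) (f' - g') x v :=
  HasDerivAt.sub (show HasDerivAt (fun t : ℝ => f (x + t • v)) f' 0 from hf)
    (show HasDerivAt (fun t : ℝ => g (x + t • v)) g' 0 from hg)

lemma ld_ofReal {f : E → ℝ} {f' : ℝ} {x v : E} (hf : HasLineDerivAt ℝ f f' x v) :
    HasLineDerivAt ℝ (fun z => (f z : ℂ)) (f' : ℂ) x v :=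
  HasDerivAt.ofReal_comp (show HasDerivAt (fun t : ℝ => f (x + t • v)) f' 0 from hf)

lemma ld_comp {f : E → ℂ} {f' : ℂ} {x v : E} (hf : HasLineDerivAt ℝ f f' x v)
    {φ : ℂ → ℂ} {φ' : ℂ} (hφ : HasDerivAt φ φ' (f x)) :
    HasLineDerivAt ℝ (fun z => φ (f z)) (φ' * f') x v := by
  have h1 : HasDerivAt (fun t : ℝ => f (x + t • v)) f' 0 := hf
  have h2 : HasDerivAt φ φ' ((fun t : ℝ => f (x + t • v)) 0) := by simpa using hφ
  exact HasDerivAt.comp (h₂ := φ) (0:ℝ) h2 h1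

end ld

lemma half_fin (n : ℕ) : volume (unitHalfBall n) < ⊤ :=
  (measure_mono (fun z hz => by simpa using hz.1.le : unitHalfBall n ⊆ closedBall 0 1)).trans_lt
      measure_closedBall_lt_top

lemma integrableOn_half {n : ℕ} {A : Euc (n+1) → ℂ} (hAc : ContinuousOn A (unitHalfBall n)) {M : ℝ}
    (hAb : ∀ z ∈ unitHalfBall n, ‖A z‖ ≤ M) : IntegrableOn A (unitHalfBall n) := by
  have : IsFiniteMeasure (volume.restrict (unitHalfBall n)) := ⟨by simpa using half_fin n⟩
  exact Integrable.of_bound (hAc.aestronglyMeasurable (isOpen_half n).measurableSet) M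
    ((ae_restrict_iff' (isOpen_half n).measurableSet).2 (Eventually.of_forall hAb))

lemma norm_setIntegral_half {n : ℕ} : ∃ V : ℝ, 0 < V ∧ ∀ (A : Euc (n+1) → ℂ) (M : ℝ), 0 ≤ M →
    (∀ z ∈ unitHalfBall n, ‖A z‖ ≤ M) → ‖∫ z in unitHalfBall n, A z‖ ≤ V * M := by
  refine ⟨volume.real (unitHalfBall n) + 1, by positivity, fun A M hM hA => ?_⟩
  refine (norm_setIntegral_le_of_norm_le_const (half_fin n) hA).trans ?_
  linarith

/-- Green identity with cutoff. -/
lemma green_bound (n : ℕ) : ∃ C : ℝ, 0 < C ∧ ∀ (h : Euc (n+1) → ℝ) (ε δ₀ : ℝ), 0 < ε → 0 < δ₀ →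
    HarmonicOn h (unitHalfBall n) → ContDiffOn ℝ 1 h (closure (unitHalfBall n)) →
    (∀ y ∈ flatFace n, |h y| ≤ ε) →
    (∀ y ∈ flatFace n, |fderivWithin ℝ h (closure (unitHalfBall n)) y
          (EuclideanSpace.single (Fin.last n) 1)| ≤ ε) →
    ∃ θ : ℝ → ℝ, Continuous θ ∧ (∀ s, 0 ≤ θ s ∧ θ s ≤ 1) ∧ (∀ s, δ₀ ≤ s → θ s = 1) ∧
    ∀ (ψ : Euc (n+1) → ℂ) (p l : Fin (n+1) → Euc (n+1) → ℂ) (N : ℝ), 0 ≤ N →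
      ContinuousOn ψ (unitHalfBall n) → (∀ i, ContinuousOn (p i) (unitHalfBall n)) →
      (∀ i, ContinuousOn (l i) (unitHalfBall n)) →
      (∀ z ∈ unitHalfBall n, 99/100 ≤ ‖z‖ → ψ z = 0 ∧ (∀ i, p i z = 0) ∧ ∀ i, l i z = 0) →
      (∀ z ∈ unitHalfBall n, ∀ i, HasLineDerivAt ℝ ψ (p i z) z (EuclideanSpace.single i 1)) →
      (∀ z ∈ unitHalfBall n, ∀ i, HasLineDerivAt ℝ (p i) (l i z) z (EuclideanSpace.single i 1)) →
      (∀ z ∈ unitHalfBall n, ‖ψ z‖ ≤ N) → (∀ z ∈ unitHalfBall n, ‖p (Fin.last n) z‖ ≤ N) →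
      ‖∫ z in unitHalfBall n, ((θ (lastc z) * h z : ℝ) : ℂ) * ∑ i, l i z‖ ≤ C * ε * N := by
  obtain ⟨B, hB0, hB, hBz⟩ := exists_smoothTransition_bound
  refine ⟨8 * B * 2 ^ n, by positivity, ?_⟩
  intro h ε δ₀ hε hδ₀ hharm hC1 hf0 hf1
  set U := unitHalfBall n with hU
  have hUo : IsOpen U := isOpen_half n
  have hud : UniqueDiffOn ℝ (closure U) := by
    apply uniqueDiffOn_convex (convex_half n).closure
    exact (half_nonempty n).mono (hUo.subset_interior_iff.2 subset_closure)
  obtain ⟨δ1, hδ1, hl1⟩ := layer_small hC1.continuousOn hε hf0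
  have hcw : ContinuousOn (fun z => fderivWithin ℝ h (closure U) z
      (EuclideanSpace.single (Fin.last n) 1)) (closure U) :=
    (hC1.continuousOn_fderivWithin hud le_rfl).clm_apply continuousOn_const
  obtain ⟨δ2, hδ2, hl2⟩ := layer_small hcw hε hf1
  obtain ⟨δ, hδ, hδa, hδb, hδc⟩ : ∃ δ : ℝ, 0 < δ ∧ δ ≤ δ1 ∧ δ ≤ δ2 ∧ δ ≤ δ₀ :=
    ⟨min δ1 (min δ2 δ₀), by positivity, min_le_left _ _, (min_le_right _ _).trans (min_le_left _ _),
      (min_le_right _ _).trans (min_le_right _ _)⟩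
  -- the cutoff
  set θ : ℝ → ℝ := fun s => Real.smoothTransition (2 / δ * s - 1) with hθ
  set θ' : ℝ → ℝ := fun s => deriv Real.smoothTransition (2 / δ * s - 1) * (2 / δ) with hθ'
  have hθc : Continuous θ := Real.smoothTransition.continuous.comp (by fun_prop)
  have hθ'c : Continuous θ' :=
    (((Real.smoothTransition.contDiff (n := 1)).continuous_deriv le_rfl).comp
      (by fun_prop)).mul continuous_const
  have hθd : ∀ s, HasDerivAt θ (θ' s) s := by
    intro s
    have h1 : HasDerivAt (fun s : ℝ => 2 / δ * s - 1) (2 / δ) s := by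
      simpa using ((hasDerivAt_id s).const_mul (2/δ)).sub_const 1
    have h2 : HasDerivAt Real.smoothTransition (deriv Real.smoothTransition (2 / δ * s - 1))
        (2 / δ * s - 1) :=
      ((Real.smoothTransition.contDiff (n := 1)).differentiable (by norm_num) _).hasDerivAt
    exact h2.comp s h1
  have hθ0 : ∀ s, s ≤ δ / 2 → θ s = 0 := by
    intro s hs
    apply Real.smoothTransition.zero_of_nonpos
    have : 2 / δ * s ≤ 2 / δ * (δ / 2) := by gcongr
    have e : 2 / δ * (δ / 2) = 1 := by field_simp
    linarith
  have hθ'0 : ∀ s, s < δ / 2 → θ' s = 0 := by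
    intro s hs
    have : 2 / δ * s < 2 / δ * (δ / 2) := by gcongr
    have e : 2 / δ * (δ / 2) = 1 := by field_simp
    simp only [hθ']
    rw [hBz _ (Or.inl (by linarith)), zero_mul]
  have hθ'1 : ∀ s, δ < s → θ' s = 0 := by
    intro s hs
    have : 2 / δ * δ < 2 / δ * s := by gcongr
    have e : 2 / δ * δ = 2 := by field_simp
    simp only [hθ']
    rw [hBz _ (Or.inr (by linarith)), zero_mul]
  have hθ'b : ∀ s, |θ' s| ≤ B * (2 / δ) := by
    intro s
    simp only [hθ']
    rw [abs_mul, abs_of_pos (show 0 < 2 / δ by positivity)]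
    gcongr
    exact hB _
  refine ⟨θ, hθc, fun s => ⟨Real.smoothTransition.nonneg _, Real.smoothTransition.le_one _⟩, ?_, ?_⟩
  · intro s hs
    apply Real.smoothTransition.one_of_one_le
    have : 2 / δ * δ ≤ 2 / δ * s := by gcongr; linarith
    have e : 2 / δ * δ = 2 := by field_simp
    linarith
  intro ψ p l N hN hψc hpc hlc hvan hψd hpd hψb hpb
  -- derivatives of h
  set e : Fin (n+1) → Euc (n+1) := fun i => EuclideanSpace.single i 1 with he
  set q : Fin (n+1) → Euc (n+1) → ℝ := fun i z => fderiv ℝ h z (e i) with hq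
  set m : Fin (n+1) → Euc (n+1) → ℝ := fun i z => fderiv ℝ (q i) z (e i) with hm
  have hhd : ∀ z ∈ U, ∀ i, HasLineDerivAt ℝ h (q i z) z (e i) := by
    intro z hz i
    exact (((hharm.1.contDiffAt (hUo.mem_nhds hz)).differentiableAt (by norm_num)).hasFDerivAt).hasLineDerivAt _
  have hqC : ∀ i, ContDiffOn ℝ 1 (q i) U := by
    intro i
    exact (hharm.1.fderiv_of_isOpen hUo (by norm_num)).clm_apply contDiffOn_const
  have hqd : ∀ z ∈ U, ∀ i, HasLineDerivAt ℝ (q i) (m i z) z (e i) := by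
    intro z hz i
    exact ((((hqC i).contDiffAt (hUo.mem_nhds hz)).differentiableAt (by norm_num)).hasFDerivAt).hasLineDerivAt _
  have hmc : ∀ i, ContinuousOn (m i) U := by
    intro i
    exact ((hqC i).continuousOn_fderiv_of_isOpen hUo le_rfl).clm_apply continuousOn_const
  have hqc : ∀ i, ContinuousOn (q i) U := fun i => (hqC i).continuousOn
  have hhc : ContinuousOn h U := hharm.1.continuousOn
  have hlap : ∀ z ∈ U, ∑ i, m i z = 0 := fun z hz => hharm.2 z hz
  have oC : ∀ f : Euc (n+1) → ℝ, ContinuousOn f U → ContinuousOn (fun z => (f z : ℂ)) U :=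
    fun f hf => Complex.continuous_ofReal.comp_continuousOn hf
  have tc : ContinuousOn (fun z => (θ (lastc z) : ℂ)) U :=
    oC _ (hθc.comp continuous_lastc).continuousOn
  have tc' : ContinuousOn (fun z => (θ' (lastc z) : ℂ)) U :=
    oC _ (hθ'c.comp continuous_lastc).continuousOn
  have htd : ∀ z, ∀ i, HasLineDerivAt ℝ (fun z : Euc (n+1) => θ (lastc z))
      (θ' (lastc z) * (if i = Fin.last n then 1 else 0)) z (e i) := by
    intro z i
    have h1 : HasDerivAt (fun s : ℝ => lastc (z + s • e i)) (if i = Fin.last n then 1 else 0) 0 := by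
      have : (fun s : ℝ => lastc (z + s • e i)) =
        fun s => lastc z + s * (if i = Fin.last n then 1 else 0) := by
        funext s; exact lastc_line z s i
      rw [this]
      have h3 := ((hasDerivAt_id (0:ℝ)).mul_const (if i = Fin.last n then (1:ℝ) else 0)).const_add (lastc z)
      rw [one_mul] at h3
      exact h3
    have h2 : HasDerivAt θ (θ' (lastc z)) ((fun s : ℝ => lastc (z + s • e i)) 0) := by
      have := hθd (lastc z)
      simpa using this
    exact HasDerivAt.comp (0:ℝ) h2 h1
  set G : Fin (n+1) → Euc (n+1) → ℂ := fun i z =>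
    (θ (lastc z) : ℂ) * ((h z : ℂ) * p i z - ψ z * (q i z : ℂ)) with hG
  set G' : Fin (n+1) → Euc (n+1) → ℂ := fun i z =>
    ((θ' (lastc z) * (if i = Fin.last n then 1 else 0) : ℝ) : ℂ) * ((h z : ℂ) * p i z - ψ z * (q i z : ℂ))
     + (θ (lastc z) : ℂ) * (((q i z : ℂ) * p i z + (h z : ℂ) * l i z) -
        (p i z * (q i z : ℂ) + ψ z * (m i z : ℂ))) with hG'
  have hinner : ∀ i, ContinuousOn (fun z => (h z : ℂ) * p i z - ψ z * (q i z : ℂ)) U := fun i =>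
    ((oC _ hhc).mul (hpc i)).sub (hψc.mul (oC _ (hqc i)))
  have hK : IsCompact {z : Euc (n+1) | ‖z‖ ≤ 99/100 ∧ δ / 2 ≤ lastc z} := by
    apply isCompact_of_isClosed_isBounded
    · exact (isClosed_le continuous_norm continuous_const).inter
        (isClosed_le continuous_const continuous_lastc)
    · exact (isBounded_closedBall (x := (0 : Euc (n+1))) (r := 99/100)).subset fun y hy => by
        simpa using hy.1
  have hKU : {z : Euc (n+1) | ‖z‖ ≤ 99/100 ∧ δ / 2 ≤ lastc z} ⊆ U := by
    intro z hz
    exact ⟨by linarith [hz.1], by linarith [hz.2]⟩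
  have hzi : ∀ i, IntegrableOn (G' i) U ∧ ∫ z in U, G' i z = 0 := by
    intro i
    have hnK : ∀ z ∈ U, z ∉ {z : Euc (n+1) | ‖z‖ ≤ 99/100 ∧ δ / 2 ≤ lastc z} →
        99/100 ≤ ‖z‖ ∨ lastc z < δ / 2 := by
      intro z _ hz
      by_contra hcon
      push Not at hcon
      exact hz ⟨hcon.1.le, hcon.2⟩
    refine zero_integral (g := G i) (g' := G' i) (v := e i) hUo hK hKU ?_ ?_ ?_ ?_ ?_
    · exact tc.mul (hinner i)
    · refine ContinuousOn.add (ContinuousOn.mul ?_ (hinner i)) (tc.mul ?_)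
      · exact oC _ ((hθ'c.comp continuous_lastc).continuousOn.mul continuousOn_const)
      · exact (((oC _ (hqc i)).mul (hpc i)).add ((oC _ hhc).mul (hlc i))).sub
          (((hpc i).mul (oC _ (hqc i))).add (hψc.mul (oC _ (hmc i))))
    · intro z hz hzK
      rcases hnK z hz hzK with h1 | h1
      · obtain ⟨a, b, c⟩ := hvan z hz h1
        simp [hG, a, b]
      · simp [hG, hθ0 _ h1.le]
    · intro z hz hzK
      rcases hnK z hz hzK with h1 | h1
      · obtain ⟨a, b, c⟩ := hvan z hz h1
        simp [hG', a, b, c]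
      · simp [hG', hθ0 _ h1.le, hθ'0 _ h1]
    · intro z hz
      exact ld_mul (ld_ofReal (htd z i)) (ld_sub (ld_mul (ld_ofReal (hhd z hz i)) (hpd z hz i))
        (ld_mul (hψd z hz i) (ld_ofReal (hqd z hz i))))
  -- the boundary term
  set A : Euc (n+1) → ℂ := fun z => (θ' (lastc z) : ℂ) *
    ((h z : ℂ) * p (Fin.last n) z - ψ z * (q (Fin.last n) z : ℂ)) with hA
  have hAc : ContinuousOn A U := tc'.mul (hinner _)
  have hA0 : ∀ z, δ < lastc z → A z = 0 := fun z hz => by simp [hA, hθ'1 _ hz]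
  have hAb : ∀ z ∈ U, ‖A z‖ ≤ B * (2 / δ) * (4 * ε * N) := by
    intro z hz
    by_cases hzl : lastc z ≤ δ
    · have h1 : |h z| ≤ 2 * ε := hl1 z hz (hzl.trans hδa)
      have h2 : |q (Fin.last n) z| ≤ 2 * ε := by
        have := hl2 z hz (hzl.trans hδb)
        rwa [fderivWithin_of_mem_nhds (mem_of_superset (hUo.mem_nhds hz) subset_closure)] at this
      simp only [hA]
      rw [norm_mul, Complex.norm_real, Real.norm_eq_abs]
      refine mul_le_mul (hθ'b _) ?_ (norm_nonneg _) (by positivity)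
      refine (norm_sub_le _ _).trans ?_
      rw [norm_mul, norm_mul, Complex.norm_real, Complex.norm_real, Real.norm_eq_abs, Real.norm_eq_abs]
      have := mul_le_mul h1 (hpb z hz) (norm_nonneg _) (by positivity)
      have := mul_le_mul (hψb z hz) h2 (abs_nonneg _) hN
      linarith
    · rw [hA0 z (not_le.1 hzl), norm_zero]; positivity
  have hAi : IntegrableOn A U := integrableOn_half hAc hAb
  have hAint : ‖∫ z in U, A z‖ ≤ B * (2 / δ) * (4 * ε * N) * (2 ^ n * δ) := by
    have hLm : MeasurableSet (U ∩ {z | lastc z ≤ δ}) :=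
      hUo.measurableSet.inter (measurableSet_le continuous_lastc.measurable measurable_const)
    have e1 : ∫ z in U, A z = ∫ z in U ∩ {z | lastc z ≤ δ}, A z := by
      apply setIntegral_eq_of_subset_of_forall_sdiff_eq_zero hUo.measurableSet inter_subset_left
      intro z hz
      apply hA0
      by_contra hcon
      exact hz.2 ⟨hz.1, not_lt.1 hcon⟩
    have hvol : volume (U ∩ {z | lastc z ≤ δ}) ≤ ENNReal.ofReal (2 ^ n * δ) :=
      (measure_mono (t := {z : Euc (n+1) | ‖z‖ ≤ 1 ∧ 0 ≤ lastc z ∧ lastc z ≤ δ})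
        (fun z hz => ⟨hz.1.1.le, hz.1.2.le, hz.2⟩)).trans (layer_volume n δ hδ.le)
    rw [e1]
    refine (norm_setIntegral_le_of_norm_le_const (hvol.trans_lt ENNReal.ofReal_lt_top)
      (fun z hz => hAb z hz.1)).trans ?_
    gcongr
    exact ENNReal.toReal_le_of_le_ofReal (by positivity) hvol
  have hsum : ∀ z ∈ U, ((θ (lastc z) * h z : ℝ) : ℂ) * ∑ i, l i z = (∑ i, G' i z) - A z := by
    intro z hz
    have e1 : ∑ i, G' i z = A z + ∑ i, ((((θ (lastc z) * h z : ℝ) : ℂ)) * l i z -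
        ((θ (lastc z) : ℂ) * ψ z) * (m i z : ℂ)) := by
      have : ∀ i, G' i z = (if i = Fin.last n then A z else 0) +
        ((((θ (lastc z) * h z : ℝ) : ℂ)) * l i z - ((θ (lastc z) : ℂ) * ψ z) * (m i z : ℂ)) := by
        intro i
        simp only [hG', hA]
        split_ifs with hi
        · subst hi; push_cast; ring
        · push_cast; ring
      simp_rw [this]
      rw [Finset.sum_add_distrib]
      simp
    rw [e1, Finset.sum_sub_distrib, ← Finset.mul_sum, ← Finset.mul_sum, ← Complex.ofReal_sum, hlap z hz]
    simp
  have hIeq : ∫ z in U, ((θ (lastc z) * h z : ℝ) : ℂ) * ∑ i, l i z = - ∫ z in U, A z := by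
    rw [setIntegral_congr_fun hUo.measurableSet hsum, integral_sub _ hAi, integral_finsetSum]
    · simp [(hzi _).2]
    · intro i _; exact (hzi i).1
    · exact integrable_finsetSum _ (fun i _ => (hzi i).1)
  rw [hIeq, norm_neg]
  refine hAint.trans (le_of_eq ?_)
  field_simp
  ring



/-- A smooth cutoff together with its first and second pure derivatives. -/
structure Cutoff (n : ℕ) where
  c : Euc (n+1) → ℝ
  c1 : Fin (n+1) → Euc (n+1) → ℝ
  c2 : Fin (n+1) → Euc (n+1) → ℝ
  M : ℝ
  hM : 0 < M
  cc : Continuous c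
  cc1 : ∀ i, Continuous (c1 i)
  cc2 : ∀ i, Continuous (c2 i)
  c0 : ∀ z, 0 ≤ c z
  cle : ∀ z, c z ≤ 1
  one : ∀ z, ‖z‖ ≤ 98/100 → c z = 1
  b1 : ∀ i z, |c1 i z| ≤ M
  b2 : ∀ i z, |c2 i z| ≤ M
  v : ∀ z, 99/100 ≤ ‖z‖ → c z = 0 ∧ (∀ i, c1 i z = 0) ∧ ∀ i, c2 i z = 0
  w : ∀ z, ‖z‖ < 98/100 → (∀ i, c1 i z = 0) ∧ ∀ i, c2 i z = 0
  d1 : ∀ z i, HasLineDerivAt ℝ c (c1 i z) z (EuclideanSpace.single i 1)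
  d2 : ∀ z i, HasLineDerivAt ℝ (c1 i) (c2 i z) z (EuclideanSpace.single i 1)

lemma exists_cutoff (n : ℕ) : Nonempty (Cutoff n) := by
  let f : ContDiffBump (0 : Euc (n+1)) := ⟨98/100, 985/1000, by norm_num, by norm_num⟩
  set e : Fin (n+1) → Euc (n+1) := fun i => EuclideanSpace.single i 1 with he
  have hf : ContDiff ℝ 2 (f : Euc (n+1) → ℝ) := f.contDiff
  set c1 : Fin (n+1) → Euc (n+1) → ℝ := fun i z => fderiv ℝ f z (e i) with hc1
  set c2 : Fin (n+1) → Euc (n+1) → ℝ := fun i z => fderiv ℝ (c1 i) z (e i) with hc2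
  have h1 : ∀ i, ContDiff ℝ 1 (c1 i) := fun i =>
    (hf.fderiv_right (m := 1) (by norm_num)).clm_apply contDiff_const
  have h2 : ∀ i, Continuous (c2 i) := fun i =>
    ((h1 i).continuous_fderiv one_ne_zero).clm_apply continuous_const
  have loc : ∀ (V : Set (Euc (n+1))) (k : ℝ), IsOpen V → (∀ z ∈ V, f z = k) → ∀ z ∈ V,
      (∀ i, c1 i z = 0) ∧ ∀ i, c2 i z = 0 := by
    intro V k hV hk
    have a1 : ∀ z ∈ V, ∀ i, c1 i z = 0 := by
      intro z hz i
      have : (f : Euc (n+1) → ℝ) =ᶠ[𝓝 z] fun _ => k := by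
        filter_upwards [hV.mem_nhds hz] with y hy using hk y hy
      simp only [hc1]
      rw [this.fderiv_eq]; simp
    intro z hz
    refine ⟨a1 z hz, fun i => ?_⟩
    have : c1 i =ᶠ[𝓝 z] fun _ => 0 := by
      filter_upwards [hV.mem_nhds hz] with y hy using a1 y hy i
    simp only [hc2]
    rw [this.fderiv_eq]; simp
  have fz : ∀ z : Euc (n+1), 985/1000 ≤ ‖z‖ → f z = 0 := fun z hz =>
    f.zero_of_le_dist (by simpa using hz)
  have out : ∀ z : Euc (n+1), 99/100 ≤ ‖z‖ → f z = 0 ∧ (∀ i, c1 i z = 0) ∧ ∀ i, c2 i z = 0 := by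
    intro z hz
    have hz' : z ∈ {z : Euc (n+1) | 985/1000 < ‖z‖} := by
      show 985/1000 < ‖z‖
      linarith
    refine ⟨fz z (by linarith), loc _ 0 (isOpen_lt continuous_const continuous_norm)
      (fun y hy => fz y (le_of_lt hy)) z hz'⟩
  have bd : ∀ g : Euc (n+1) → ℝ, Continuous g → (∀ z, 99/100 ≤ ‖z‖ → g z = 0) →
      ∃ M, ∀ z, |g z| ≤ M := by
    intro g hg h0
    obtain ⟨M, hM⟩ := (isCompact_closedBall (0 : Euc (n+1)) 1).exists_bound_of_continuousOn
      hg.continuousOn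
    refine ⟨max M 0, fun z => ?_⟩
    by_cases hz : ‖z‖ ≤ 1
    · exact (hM z (by simpa using hz)).trans (le_max_left _ _)
    · rw [h0 z (by linarith), abs_zero]; exact le_max_right _ _
  choose M1 hM1 using fun i => bd (c1 i) (h1 i).continuous (fun z hz => (out z hz).2.1 i)
  choose M2 hM2 using fun i => bd (c2 i) (h2 i) (fun z hz => (out z hz).2.2 i)
  have n1 : ∀ i, 0 ≤ M1 i := fun i => (abs_nonneg _).trans (hM1 i 0)
  have n2 : ∀ i, 0 ≤ M2 i := fun i => (abs_nonneg _).trans (hM2 i 0)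
  have s1 : ∀ i, M1 i ≤ ∑ i, M1 i := fun i =>
    Finset.single_le_sum (fun j _ => n1 j) (Finset.mem_univ i)
  have s2 : ∀ i, M2 i ≤ ∑ i, M2 i := fun i =>
    Finset.single_le_sum (fun j _ => n2 j) (Finset.mem_univ i)
  have p1 : 0 ≤ ∑ i, M1 i := Finset.sum_nonneg fun j _ => n1 j
  have p2 : 0 ≤ ∑ i, M2 i := Finset.sum_nonneg fun j _ => n2 j
  refine ⟨⟨f, c1, c2, ∑ i, M1 i + ∑ i, M2 i + 1, by positivity, f.continuous,
    fun i => (h1 i).continuous, h2, fun z => f.nonneg, fun z => f.le_one, ?_, ?_, ?_, out, ?_, ?_, ?_⟩⟩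
  · intro z hz
    exact f.one_of_mem_closedBall (by simpa using hz)
  · intro i z; linarith [hM1 i z, s1 i]
  · intro i z; linarith [hM2 i z, s2 i]
  · intro z hz
    exact loc {z | ‖z‖ < 98/100} 1 (isOpen_lt continuous_norm continuous_const)
      (fun y hy => f.one_of_mem_closedBall (by simpa using le_of_lt hy)) z hz
  · intro z i
    exact (hf.differentiable (by norm_num) z).hasFDerivAt.hasLineDerivAt _
  · intro z i
    exact ((h1 i).differentiable (by norm_num) z).hasFDerivAt.hasLineDerivAt _

/-- The exponent `(n+1)/2`. -/
def pw (n : ℕ) : ℝ := ((n : ℝ) + 1) / 2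

/-- `ζ^{-p}`. -/
def ph1 (n : ℕ) (ζ : ℂ) : ℂ := ζ ^ (-(pw n : ℂ))

/-- `ζ^{-p-1}`. -/
def ph2 (n : ℕ) (ζ : ℂ) : ℂ := ζ ^ (-(pw n : ℂ) - 1)

lemma ph1_deriv (n : ℕ) {ζ : ℂ} (h : ζ ∈ Complex.slitPlane) :
    HasDerivAt (ph1 n) (-(pw n : ℂ) * ph2 n ζ) ζ := by
  have := (hasDerivAt_id ζ).cpow_const (c := -(pw n : ℂ)) h
  rw [mul_one] at this
  exact this

lemma ph2_cont (n : ℕ) {ζ : ℂ} (h : ζ ∈ Complex.slitPlane) : ContinuousAt (ph2 n) ζ :=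
  ((hasDerivAt_id ζ).cpow_const (c := -(pw n : ℂ) - 1) h).continuousAt

lemma mul_ph2 (n : ℕ) {ζ : ℂ} (h : ζ ∈ Complex.slitPlane) : ζ * ph2 n ζ = ph1 n ζ := by
  have h0 := Complex.slitPlane_ne_zero h
  unfold ph1 ph2
  rw [Complex.cpow_sub _ _ h0, Complex.cpow_one]
  field_simp

/-- The complexified quadratic form. -/
def cQ {n : ℕ} (b : Fin (n+1) → ℂ) (r : ℝ) (z : Euc (n+1)) : ℂ :=
  ∑ i, ((z i : ℂ) - b i) ^ 2 + (r : ℂ) ^ 2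

/-- The part of the Laplacian of the kernel involving derivatives of the cutoff. -/
def cJ {n : ℕ} (X : Cutoff n) (φ : ℂ → ℂ) (b : Fin (n+1) → ℂ) (r : ℝ) (z : Euc (n+1)) : ℂ :=
  (∑ i, (X.c2 i z : ℂ)) * φ (cQ b r z) +
    4 * (∑ i, (X.c1 i z : ℂ) * ((z i : ℂ) - b i)) * ph1 n (cQ b r z)

lemma cQ_cont {n : ℕ} (b : Fin (n+1) → ℂ) (r : ℝ) : Continuous (cQ b r) := by
  unfold cQ; fun_prop

lemma cv_ld {n : ℕ} (b : Fin (n+1) → ℂ) (z : Euc (n+1)) (i j : Fin (n+1)) :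
    HasLineDerivAt ℝ (fun z : Euc (n+1) => (z j : ℂ) - b j) (if j = i then 1 else 0) z
      (EuclideanSpace.single i 1) := by
  show HasDerivAt (fun s : ℝ => (((z + s • EuclideanSpace.single i (1:ℝ)) j : ℝ) : ℂ) - b j) _ 0
  have e : (fun s : ℝ => (((z + s • EuclideanSpace.single i (1:ℝ)) j : ℝ) : ℂ) - b j) =
      fun s : ℝ => (s : ℂ) * (if j = i then 1 else 0) + ((z j : ℂ) - b j) := by
    funext s
    simp only [PiLp.add_apply, PiLp.smul_apply, PiLp.single_apply, smul_eq_mul]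
    split_ifs <;> push_cast <;> ring
  rw [e]
  have h3 := (((hasDerivAt_id (0:ℝ)).ofReal_comp).mul_const (if j = i then (1:ℂ) else 0)).add_const
    ((z j : ℂ) - b j)
  rw [Complex.ofReal_one, one_mul] at h3
  exact h3

lemma cQ_ld {n : ℕ} (b : Fin (n+1) → ℂ) (r : ℝ) (z : Euc (n+1)) (i : Fin (n+1)) :
    HasLineDerivAt ℝ (cQ b r) (2 * ((z i : ℂ) - b i)) z (EuclideanSpace.single i 1) := by
  have h1 : ∀ j ∈ (Finset.univ : Finset (Fin (n+1))), HasDerivAt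
      (fun s : ℝ => ((((z + s • EuclideanSpace.single i (1:ℝ)) j : ℝ) : ℂ) - b j) ^ 2)
      (if j = i then 2 * ((z i : ℂ) - b i) else 0) 0 := by
    intro j _
    have h2 := ld_mul (cv_ld b z i j) (cv_ld b z i j)
    have e : ((if j = i then 1 else 0) * ((z j : ℂ) - b j) + ((z j : ℂ) - b j) * (if j = i then 1 else 0))
        = (if j = i then 2 * ((z i : ℂ) - b i) else 0) := by
      split_ifs with hj
      · subst hj; ring
      · ring
    rw [e] at h2
    have h3 : HasDerivAt (fun s : ℝ => ((((z + s • EuclideanSpace.single i (1:ℝ)) j : ℝ) : ℂ) - b j) *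
      ((((z + s • EuclideanSpace.single i (1:ℝ)) j : ℝ) : ℂ) - b j)) _ 0 := h2
    simp only [← sq] at h3
    exact h3
  have h2 := (HasDerivAt.fun_sum h1).add_const ((r : ℂ) ^ 2)
  simp only [Finset.sum_ite_eq', Finset.mem_univ, if_true] at h2
  exact h2

/-- The Green estimate property. -/
def GreenProp (n : ℕ) (g : Euc (n+1) → ℝ) (K : ℝ) : Prop :=
    ∀ (ψ : Euc (n+1) → ℂ) (p l : Fin (n+1) → Euc (n+1) → ℂ) (N : ℝ), 0 ≤ N →
      ContinuousOn ψ (unitHalfBall n) → (∀ i, ContinuousOn (p i) (unitHalfBall n)) →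
      (∀ i, ContinuousOn (l i) (unitHalfBall n)) →
      (∀ z ∈ unitHalfBall n, 99/100 ≤ ‖z‖ → ψ z = 0 ∧ (∀ i, p i z = 0) ∧ ∀ i, l i z = 0) →
      (∀ z ∈ unitHalfBall n, ∀ i, HasLineDerivAt ℝ ψ (p i z) z (EuclideanSpace.single i 1)) →
      (∀ z ∈ unitHalfBall n, ∀ i, HasLineDerivAt ℝ (p i) (l i z) z (EuclideanSpace.single i 1)) →
      (∀ z ∈ unitHalfBall n, ‖ψ z‖ ≤ N) → (∀ z ∈ unitHalfBall n, ‖p (Fin.last n) z‖ ≤ N) →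
      ‖∫ z in unitHalfBall n, (g z : ℂ) * ∑ i, l i z‖ ≤ K * N

lemma kernel_green {n : ℕ} (X : Cutoff n) {φ : ℂ → ℂ}
    (hφ : ∀ ζ ∈ Complex.slitPlane, HasDerivAt φ (ph1 n ζ) ζ)
    {g : Euc (n+1) → ℝ} {K : ℝ} (hG : GreenProp n g K) (b : Fin (n+1) → ℂ) (r : ℝ)
    (hs : ∀ z ∈ unitHalfBall n, cQ b r z ∈ Complex.slitPlane) {A : ℝ} (hA : 0 ≤ A)
    (hA1 : ∀ z ∈ unitHalfBall n, ‖φ (cQ b r z)‖ ≤ A)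
    (hA2 : ∀ z ∈ unitHalfBall n, ‖ph1 n (cQ b r z)‖ ≤ A)
    (hb : ∀ z ∈ unitHalfBall n, ‖(z (Fin.last n) : ℂ) - b (Fin.last n)‖ ≤ 3) :
    ‖∫ z in unitHalfBall n, (g z : ℂ) * (cJ X φ b r z +
      (X.c z : ℂ) * (2 * ((n : ℂ) + 1) * (r : ℂ) ^ 2 * ph2 n (cQ b r z)))‖ ≤ K * ((X.M + 7) * A) := by
  have hQc := cQ_cont b r
  have c0 : ContinuousOn (fun z => φ (cQ b r z)) (unitHalfBall n) := fun z hz =>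
    ((hφ _ (hs z hz)).continuousAt.comp hQc.continuousAt).continuousWithinAt
  have c1 : ContinuousOn (fun z => ph1 n (cQ b r z)) (unitHalfBall n) := fun z hz =>
    ((ph1_deriv n (hs z hz)).continuousAt.comp hQc.continuousAt).continuousWithinAt
  have c2 : ContinuousOn (fun z => ph2 n (cQ b r z)) (unitHalfBall n) := fun z hz =>
    ((ph2_cont n (hs z hz)).comp hQc.continuousAt).continuousWithinAt
  have cv : ∀ i, Continuous (fun z : Euc (n+1) => (z i : ℂ) - b i) := fun i => by fun_prop
  have oC : ∀ f : Euc (n+1) → ℝ, Continuous f → ContinuousOn (fun z => (f z : ℂ)) (unitHalfBall n) :=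
    fun f hf => (Complex.continuous_ofReal.comp hf).continuousOn
  have main := hG (fun z => (X.c z : ℂ) * φ (cQ b r z))
    (fun i z => (X.c1 i z : ℂ) * φ (cQ b r z) +
      (X.c z : ℂ) * (ph1 n (cQ b r z) * (2 * ((z i : ℂ) - b i))))
    (fun i z => ((X.c2 i z : ℂ) * φ (cQ b r z) + (X.c1 i z : ℂ) * (ph1 n (cQ b r z) * (2 * ((z i : ℂ) - b i)))) +
      ((X.c1 i z : ℂ) * (ph1 n (cQ b r z) * (2 * ((z i : ℂ) - b i))) +
       (X.c z : ℂ) * ((-(pw n : ℂ) * ph2 n (cQ b r z) * (2 * ((z i : ℂ) - b i))) * (2 * ((z i : ℂ) - b i))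
         + ph1 n (cQ b r z) * (0 * ((z i : ℂ) - b i) + 2 * 1))))
    ((X.M + 7) * A) (mul_nonneg (by linarith [X.hM]) hA) ?_ ?_ ?_ ?_ ?_ ?_ ?_ ?_
  · refine le_trans (le_of_eq ?_) main
    congr 1
    apply setIntegral_congr_fun (isOpen_half n).measurableSet
    intro z hz
    simp only []
    congr 1
    have hq := mul_ph2 n (hs z hz)
    have hsumv : ∑ i, ((z i : ℂ) - b i) ^ 2 = cQ b r z - (r : ℂ) ^ 2 := by simp [cQ]
    have e1 : ∀ i, (((X.c2 i z : ℂ) * φ (cQ b r z) + (X.c1 i z : ℂ) * (ph1 n (cQ b r z) * (2 * ((z i : ℂ) - b i)))) +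
      ((X.c1 i z : ℂ) * (ph1 n (cQ b r z) * (2 * ((z i : ℂ) - b i))) +
       (X.c z : ℂ) * ((-(pw n : ℂ) * ph2 n (cQ b r z) * (2 * ((z i : ℂ) - b i))) * (2 * ((z i : ℂ) - b i))
         + ph1 n (cQ b r z) * (0 * ((z i : ℂ) - b i) + 2 * 1)))) =
      (X.c2 i z : ℂ) * φ (cQ b r z) + ((X.c1 i z : ℂ) * ((z i : ℂ) - b i)) * (4 * ph1 n (cQ b r z)) +
      (((z i : ℂ) - b i) ^ 2 * ((X.c z : ℂ) * (-4 * (pw n : ℂ) * ph2 n (cQ b r z))) +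
        (X.c z : ℂ) * (2 * ph1 n (cQ b r z))) := by
      intro i; ring
    simp_rw [e1]
    rw [Finset.sum_add_distrib, Finset.sum_add_distrib, Finset.sum_add_distrib, ← Finset.sum_mul,
      ← Finset.sum_mul, ← Finset.sum_mul, hsumv]
    simp only [Finset.sum_const, Finset.card_univ, Fintype.card_fin, nsmul_eq_mul, cJ]
    rw [← hq]
    simp only [pw]
    push_cast
    ring
  · exact (oC _ X.cc).mul c0
  · intro i
    exact ((oC _ (X.cc1 i)).mul c0).add ((oC _ X.cc).mul (c1.mul
      (continuous_const.mul (cv i)).continuousOn))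
  · intro i
    have h2v := (continuous_const (y := (2:ℂ))).mul (cv i)
    refine ContinuousOn.add (ContinuousOn.add ?_ ?_) (ContinuousOn.add ?_ ?_)
    · exact (oC _ (X.cc2 i)).mul c0
    · exact (oC _ (X.cc1 i)).mul (c1.mul h2v.continuousOn)
    · exact (oC _ (X.cc1 i)).mul (c1.mul h2v.continuousOn)
    · refine (oC _ X.cc).mul (ContinuousOn.add ?_ ?_)
      · exact ((continuousOn_const.mul c2).mul h2v.continuousOn).mul h2v.continuousOn
      · exact c1.mul (((continuous_const).mul (cv i)).add continuous_const).continuousOn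
  · intro z hz hz1
    obtain ⟨a, b, c⟩ := X.v z hz1
    simp [a, b, c]
  · intro z hz i
    exact ld_mul (ld_ofReal (X.d1 z i)) (ld_comp (cQ_ld b r z i) (hφ _ (hs z hz)))
  · intro z hz i
    have hv := cv_ld b z i i
    rw [if_pos rfl] at hv
    have hconst : HasLineDerivAt ℝ (fun _ : Euc (n+1) => (2:ℂ)) 0 z (EuclideanSpace.single i 1) :=
      hasDerivAt_const _ _
    exact ld_add (ld_mul (ld_ofReal (X.d2 z i)) (ld_comp (cQ_ld b r z i) (hφ _ (hs z hz))))
      (ld_mul (ld_ofReal (X.d1 z i)) (ld_mul (ld_comp (cQ_ld b r z i) (ph1_deriv n (hs z hz)))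
        (ld_mul hconst hv)))
  · intro z hz
    rw [norm_mul, Complex.norm_real, Real.norm_eq_abs, abs_of_nonneg (X.c0 z)]
    have := mul_le_mul (X.cle z) (hA1 z hz) (norm_nonneg _) zero_le_one
    have := mul_nonneg X.hM.le hA
    linarith
  · intro z hz
    refine (norm_add_le _ _).trans ?_
    rw [norm_mul, norm_mul, norm_mul, norm_mul, Complex.norm_real, Real.norm_eq_abs,
      Complex.norm_real, Real.norm_eq_abs, abs_of_nonneg (X.c0 z)]
    have h1 := mul_le_mul (X.b1 (Fin.last n) z) (hA1 z hz) (norm_nonneg _) X.hM.le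
    have h3 : ‖(2:ℂ)‖ * ‖(z (Fin.last n) : ℂ) - b (Fin.last n)‖ ≤ 6 := by
      have := hb z hz
      simp; linarith
    have h2 := mul_le_mul (hA2 z hz) h3 (by positivity) hA
    have h4 := mul_le_mul (X.cle z) h2 (by positivity) zero_le_one
    linarith



lemma differentiableOn_integral {α : Type*} [MeasurableSpace α] (μ : Measure α) [IsFiniteMeasure μ]
    {f : ℂ → α → ℂ} {R M : ℝ} (hm : ∀ τ ∈ ball (0:ℂ) R, AEStronglyMeasurable (f τ) μ)
    (hd : ∀ᵐ z ∂μ, DifferentiableOn ℂ (fun τ => f τ z) (ball 0 R))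
    (hb : ∀ᵐ z ∂μ, ∀ τ ∈ ball (0:ℂ) R, ‖f τ z‖ ≤ M) :
    DifferentiableOn ℂ (fun τ => ∫ z, f τ z ∂μ) (ball 0 R) := by
  intro τ hτ
  obtain ⟨ρ, hρ, hsub⟩ := Metric.isOpen_iff.1 isOpen_ball τ hτ
  have hsmall : ∀ w ∈ ball τ (ρ/2), closedBall w (ρ/4) ⊆ ball (0:ℂ) R := by
    intro w hw y hy
    apply hsub
    have h1 := mem_ball.1 hw
    have h2 := mem_closedBall.1 hy
    have := dist_triangle y w τ
    exact mem_ball.2 (by linarith)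
  have hmeas : AEStronglyMeasurable (fun z => deriv (fun τ => f τ z) τ) μ := by
    set s : ℕ → ℂ := fun k => ((ρ / 2 / ((k:ℝ)+1) : ℝ) : ℂ) with hs
    have hs0 : ∀ k, s k ≠ 0 := fun k => by
      simp only [hs]; rw [Ne, Complex.ofReal_eq_zero]; positivity
    have hsl : Tendsto s atTop (𝓝[≠] 0) := by
      rw [tendsto_nhdsWithin_iff]
      refine ⟨?_, Eventually.of_forall hs0⟩
      have h1 : Tendsto (fun k : ℕ => ρ / 2 / ((k:ℝ)+1)) atTop (𝓝 0) :=
        tendsto_const_nhds.div_atTop (tendsto_atTop_add_const_right _ _ tendsto_natCast_atTop_atTop)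
      have := (Complex.continuous_ofReal.tendsto 0).comp h1
      rw [Complex.ofReal_zero] at this
      exact this
    have hsm : ∀ k, τ + s k ∈ ball (0:ℂ) R := by
      intro k
      apply hsub
      rw [mem_ball, dist_eq_norm, add_sub_cancel_left]
      simp only [hs]
      rw [Complex.norm_real, Real.norm_eq_abs, abs_of_pos (by positivity)]
      have : ρ / 2 / ((k:ℝ)+1) ≤ ρ / 2 := by
        apply div_le_self (by positivity)
        linarith [Nat.cast_nonneg (α := ℝ) k]
      linarith
    refine aestronglyMeasurable_of_tendsto_ae atTop
      (f := fun k z => (s k)⁻¹ • (f (τ + s k) z - f τ z)) ?_ ?_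
    · intro k
      exact AEStronglyMeasurable.const_smul (f := fun z => f (τ + s k) z - f τ z)
        ((hm _ (hsm k)).sub (hm _ hτ)) ((s k)⁻¹)
    · filter_upwards [hd] with z hz
      have := ((hz τ hτ).differentiableAt (isOpen_ball.mem_nhds hτ)).hasDerivAt.tendsto_slope_zero
      exact this.comp hsl
  have key := hasDerivAt_integral_of_dominated_loc_of_deriv_le (μ := μ) (F := f) (x₀ := τ)
    (F' := fun τ z => deriv (fun τ => f τ z) τ) (s := ball τ (ρ/2)) (bound := fun _ => M / (ρ/4))
    (ball_mem_nhds _ (by positivity)) ?_ ?_ hmeas ?_ (integrable_const _) ?_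
  · exact key.2.differentiableAt.differentiableWithinAt
  · filter_upwards [isOpen_ball.mem_nhds hτ] with y hy using hm y hy
  · exact Integrable.of_bound (hm τ hτ) M (hb.mono fun z hz => hz τ hτ)
  · filter_upwards [hd, hb] with z hz1 hz2 w hw
    have hc := hsmall w hw
    apply Complex.norm_deriv_le_of_forall_mem_sphere_norm_le (by positivity)
    · exact DifferentiableOn.diffContOnCl (hz1.mono (closure_ball_subset_closedBall.trans hc))
    · intro y hy
      exact hz2 y (hc (sphere_subset_closedBall hy))
  · filter_upwards [hd] with z hz w hw
    have hw' : w ∈ ball (0:ℂ) R := hsmall w hw (mem_closedBall_self (by positivity))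
    exact ((hz w hw').differentiableAt (isOpen_ball.mem_nhds hw')).hasDerivAt

/-- the complexified centre -/
def bv {n : ℕ} (x0 : Euc (n+1)) (τ : ℂ) (i : Fin (n+1)) : ℂ :=
  (x0 i : ℂ) + if i = Fin.last n then τ else 0

lemma cQ_bv {n : ℕ} (x0 : Euc (n+1)) (τ : ℂ) (r : ℝ) (z : Euc (n+1)) :
    cQ (bv x0 τ) r z = ((‖z - x0‖ ^ 2 : ℝ) : ℂ) - 2 * τ * (((z - x0) (Fin.last n) : ℝ) : ℂ) + τ ^ 2
      + (r : ℂ) ^ 2 := by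
  have e1 : ∀ i, ((z i : ℂ) - bv x0 τ i) ^ 2 = ((((z - x0) i) ^ 2 : ℝ) : ℂ) +
      if i = Fin.last n then - 2 * τ * (((z - x0) (Fin.last n) : ℝ) : ℂ) + τ ^ 2 else 0 := by
    intro i
    simp only [bv, PiLp.sub_apply]
    split_ifs with hi
    · subst hi; push_cast; ring
    · push_cast; ring
  unfold cQ
  simp_rw [e1]
  rw [Finset.sum_add_distrib, EuclideanSpace.real_norm_sq_eq]
  simp
  ring

lemma cQ_mem {n : ℕ} {x0 z : Euc (n+1)} {τ : ℂ} {r : ℝ} (hr : 0 < r) (hr1 : r ≤ 1)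
    (h1 : ‖τ‖ ≤ 2/5 * ‖z - x0‖) (h2 : 1/200 ≤ ‖z - x0‖) (h3 : ‖z - x0‖ ≤ 2) :
    1/1000000 ≤ (cQ (bv x0 τ) r z).re ∧ ‖cQ (bv x0 τ) r z‖ ≤ 20 := by
  have hu : |(z - x0) (Fin.last n)| ≤ ‖z - x0‖ := by
    simpa using PiLp.norm_apply_le (z - x0) (Fin.last n)
  rw [cQ_bv]
  set R := ‖z - x0‖
  set u := (z - x0) (Fin.last n)
  have hn : ‖2 * τ * (u : ℂ)‖ ≤ 4/5 * R ^ 2 := by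
    rw [norm_mul, norm_mul, Complex.norm_real, Real.norm_eq_abs]
    have := mul_le_mul h1 hu (abs_nonneg _) (by positivity)
    simp only [Complex.norm_ofNat]
    nlinarith
  have hn2 : ‖τ ^ 2‖ ≤ 4/25 * R ^ 2 := by
    rw [norm_pow]
    have := pow_le_pow_left₀ (norm_nonneg τ) h1 2
    nlinarith
  constructor
  · have a1 := Complex.abs_re_le_norm (2 * τ * (u : ℂ))
    have a2 := Complex.abs_re_le_norm (τ ^ 2)
    have a3 := abs_le.1 (a1.trans hn)
    have a4 := abs_le.1 (a2.trans hn2)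
    have e : ((((R ^ 2 : ℝ) : ℂ) - 2 * τ * (u : ℂ) + τ ^ 2 + (r : ℂ) ^ 2)).re =
        R ^ 2 - (2 * τ * (u : ℂ)).re + (τ ^ 2).re + r ^ 2 := by
      rw [← Complex.ofReal_pow r]
      rw [Complex.add_re, Complex.add_re, Complex.sub_re, Complex.ofReal_re, Complex.ofReal_re]
    rw [e]
    nlinarith [sq_nonneg r]
  · refine (norm_add_le _ _).trans ?_
    have b1 := norm_add_le (((R ^ 2 : ℝ) : ℂ) - 2 * τ * (u : ℂ)) (τ ^ 2)
    have b2 := norm_sub_le (((R ^ 2 : ℝ) : ℂ)) (2 * τ * (u : ℂ))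
    rw [Complex.norm_real, Real.norm_eq_abs, abs_of_nonneg (sq_nonneg R)] at b2
    have b3 : ‖(r : ℂ) ^ 2‖ ≤ 1 := by
      rw [norm_pow, Complex.norm_real, Real.norm_eq_abs, abs_of_pos hr]
      nlinarith
    nlinarith

lemma exists_A (n : ℕ) {φ : ℂ → ℂ} (hφ : ∀ ζ ∈ Complex.slitPlane, HasDerivAt φ (ph1 n ζ) ζ) :
    ∃ A : ℝ, 0 < A ∧ ∀ ζ : ℂ, 1/1000000 ≤ ζ.re → ‖ζ‖ ≤ 20 → ‖φ ζ‖ ≤ A ∧ ‖ph1 n ζ‖ ≤ A ∧ ‖ph2 n ζ‖ ≤ A := by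
  have hK : IsCompact {ζ : ℂ | 1/1000000 ≤ ζ.re ∧ ‖ζ‖ ≤ 20} := by
    apply isCompact_of_isClosed_isBounded
    · exact (isClosed_le continuous_const Complex.continuous_re).inter
        (isClosed_le continuous_norm continuous_const)
    · exact (isBounded_closedBall (x := (0 : ℂ)) (r := 20)).subset fun y hy => by
        simpa using hy.2
  have hs : ∀ ζ ∈ {ζ : ℂ | 1/1000000 ≤ ζ.re ∧ ‖ζ‖ ≤ 20}, ζ ∈ Complex.slitPlane := fun ζ hζ =>
    Or.inl (lt_of_lt_of_le (by norm_num) hζ.1)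
  obtain ⟨A0, h0⟩ := hK.exists_bound_of_continuousOn (f := φ)
    (fun ζ hζ => (hφ ζ (hs ζ hζ)).continuousAt.continuousWithinAt)
  obtain ⟨A1, h1⟩ := hK.exists_bound_of_continuousOn (f := ph1 n)
    (fun ζ hζ => (ph1_deriv n (hs ζ hζ)).continuousAt.continuousWithinAt)
  obtain ⟨A2, h2⟩ := hK.exists_bound_of_continuousOn (f := ph2 n)
    (fun ζ hζ => (ph2_cont n (hs ζ hζ)).continuousWithinAt)
  refine ⟨|A0| + |A1| + |A2| + 1, by positivity, fun ζ hr hn => ?_⟩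
  have := h0 ζ ⟨hr, hn⟩
  have := h1 ζ ⟨hr, hn⟩
  have := h2 ζ ⟨hr, hn⟩
  have := le_abs_self A0
  have := le_abs_self A1
  have := le_abs_self A2
  have := abs_nonneg A0
  have := abs_nonneg A1
  have := abs_nonneg A2
  refine ⟨?_, ?_, ?_⟩ <;> linarith

lemma cJ_cont {n : ℕ} (X : Cutoff n) {φ : ℂ → ℂ}
    (hφ : ∀ ζ ∈ Complex.slitPlane, HasDerivAt φ (ph1 n ζ) ζ) (b : Fin (n+1) → ℂ) (r : ℝ)
    (hs : ∀ z ∈ unitHalfBall n, 98/100 ≤ ‖z‖ → cQ b r z ∈ Complex.slitPlane) :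
    ContinuousOn (cJ X φ b r) (unitHalfBall n) := by
  intro z hz
  apply ContinuousAt.continuousWithinAt
  rcases lt_or_ge ‖z‖ (98/100) with h | h
  · have : cJ X φ b r =ᶠ[𝓝 z] fun _ => 0 := by
      filter_upwards [(isOpen_lt continuous_norm continuous_const).mem_nhds h] with y hy
      obtain ⟨a, c⟩ := X.w y hy
      simp [cJ, a, c]
    exact continuousAt_const.congr this.symm
  · have hQc := cQ_cont b r
    have c0 : ContinuousAt (fun z => φ (cQ b r z)) z :=
      ((hφ _ (hs z hz h)).continuousAt.comp hQc.continuousAt)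
    have c1 : ContinuousAt (fun z => ph1 n (cQ b r z)) z :=
      ((ph1_deriv n (hs z hz h)).continuousAt.comp hQc.continuousAt)
    have oC : ∀ f : Euc (n+1) → ℝ, Continuous f → Continuous (fun z => (f z : ℂ)) :=
      fun f hf => (Complex.continuous_ofReal.comp hf)
    refine ContinuousAt.add (ContinuousAt.mul ?_ c0) (ContinuousAt.mul ?_ c1)
    · exact (continuous_finsetSum _ fun i _ => oC _ (X.cc2 i)).continuousAt
    · refine (continuous_const.mul (continuous_finsetSum _ fun i _ => ?_)).continuousAt
      exact (oC _ (X.cc1 i)).mul (by fun_prop)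

lemma cJ_bound {n : ℕ} (X : Cutoff n) {φ : ℂ → ℂ} {b : Fin (n+1) → ℂ} {r A : ℝ} {z : Euc (n+1)} (hA : 0 ≤ A)
    (h0 : ‖φ (cQ b r z)‖ ≤ A) (h1 : ‖ph1 n (cQ b r z)‖ ≤ A) (hv : ∀ i, ‖(z i : ℂ) - b i‖ ≤ 3) :
    ‖cJ X φ b r z‖ ≤ 13 * (n + 1) * X.M * A := by
  have hM := X.hM
  have s2 : ‖∑ i, (X.c2 i z : ℂ)‖ ≤ (n + 1) * X.M := by
    refine (norm_sum_le _ _).trans ?_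
    have : ∑ i : Fin (n+1), ‖(X.c2 i z : ℂ)‖ ≤ ∑ i : Fin (n+1), X.M :=
      Finset.sum_le_sum fun i _ => by simpa using X.b2 i z
    simpa using this
  have s1 : ‖∑ i, (X.c1 i z : ℂ) * ((z i : ℂ) - b i)‖ ≤ (n + 1) * (X.M * 3) := by
    refine (norm_sum_le _ _).trans ?_
    have : ∑ i : Fin (n+1), ‖(X.c1 i z : ℂ) * ((z i : ℂ) - b i)‖ ≤ ∑ i : Fin (n+1), X.M * 3 :=
      Finset.sum_le_sum fun i _ => by
        rw [norm_mul]
        exact mul_le_mul (by simpa using X.b1 i z) (hv i) (norm_nonneg _) hM.le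
    simpa using this
  unfold cJ
  refine (norm_add_le _ _).trans ?_
  rw [norm_mul, norm_mul, norm_mul]
  simp only [Complex.norm_ofNat]
  have t1 := mul_le_mul s2 h0 (norm_nonneg _) (by positivity)
  have t2 := mul_le_mul (mul_le_mul_of_nonneg_left s1 (show (0:ℝ) ≤ 4 by norm_num)) h1
    (norm_nonneg _) (by positivity)
  nlinarith

/-- The holomorphic function of the proof. -/
def FF {n : ℕ} (X : Cutoff n) (φ : ℂ → ℂ) (g : Euc (n+1) → ℝ) (x0 : Euc (n+1)) (r : ℝ) (τ : ℂ) : ℂ :=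
  ∫ z in unitHalfBall n, (g z : ℂ) * cJ X φ (bv x0 τ) r z

lemma FF_bounds {n : ℕ} (X : Cutoff n) {φ : ℂ → ℂ}
    (hφ : ∀ ζ ∈ Complex.slitPlane, HasDerivAt φ (ph1 n ζ) ζ) :
    ∃ C1 : ℝ, 0 < C1 ∧ ∀ (x0 : Euc (n+1)) (r : ℝ) (g : Euc (n+1) → ℝ), ‖x0‖ ≤ 1/2 →
      lastc x0 = -(1/200) → 0 < r → r ≤ 1 → ContinuousOn g (unitHalfBall n) →
      (∀ z ∈ unitHalfBall n, |g z| ≤ 1) →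
      DifferentiableOn ℂ (FF X φ g x0 r) (ball 0 (2/5 * (98/100 - ‖x0‖))) ∧
      (∀ τ ∈ ball (0:ℂ) (2/5 * (98/100 - ‖x0‖)), ‖FF X φ g x0 r τ‖ ≤ C1) ∧
      ∀ K, 0 ≤ K → GreenProp n g K → ∀ τ : ℂ, ‖τ‖ ≤ 1/500 → ‖FF X φ g x0 r τ‖ ≤ C1 * (K + r ^ 2) := by
  obtain ⟨A, hA0, hA⟩ := exists_A n hφ
  obtain ⟨V, hV0, hV⟩ := norm_setIntegral_half (n := n)
  have hM := X.hM
  refine ⟨V * (13 * (n + 1) * X.M * A) + (X.M + 7) * A + V * (2 * (n + 1) * A), by positivity, ?_⟩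
  intro x0 r g hx0 hlx hr hr1 hg hg1
  have hu1 : ∀ z ∈ unitHalfBall n, 1/200 ≤ ‖z - x0‖ := by
    intro z hz
    have h1 : |lastc z - lastc x0| ≤ ‖z - x0‖ := by
      simpa [lastc] using PiLp.norm_apply_le (z - x0) (Fin.last n)
    rw [hlx] at h1
    linarith [le_abs_self (lastc z - -(1/200)), hz.2]
  have hu2 : ∀ z ∈ unitHalfBall n, ‖z - x0‖ ≤ 3/2 := by
    intro z hz
    linarith [norm_sub_le z x0, hz.1]
  have hu3 : ∀ z : Euc (n+1), 98/100 ≤ ‖z‖ → 98/100 - ‖x0‖ ≤ ‖z - x0‖ := by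
    intro z hz
    linarith [norm_sub_norm_le z x0]
  have hvb : ∀ z ∈ unitHalfBall n, ∀ τ : ℂ, ‖τ‖ ≤ 1 → ∀ i, ‖(z i : ℂ) - bv x0 τ i‖ ≤ 3 := by
    intro z hz τ hτ i
    have e : (z i : ℂ) - bv x0 τ i = (((z - x0) i : ℝ) : ℂ) - (if i = Fin.last n then τ else 0) := by
      simp [bv]; ring
    rw [e]
    refine (norm_sub_le _ _).trans ?_
    have h1 : ‖(((z - x0) i : ℝ) : ℂ)‖ ≤ ‖z - x0‖ := by
      rw [Complex.norm_real]; exact PiLp.norm_apply_le (z - x0) i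
    have h2 : ‖(if i = Fin.last n then τ else 0)‖ ≤ 1 := by
      split_ifs
      · exact hτ
      · simp
    linarith [hu2 z hz]
  have slit : ∀ ζ : ℂ, 1/1000000 ≤ ζ.re → ζ ∈ Complex.slitPlane := fun ζ h =>
    Or.inl (lt_of_lt_of_le (by norm_num) h)
  have nx := norm_nonneg x0
  -- outer region
  have hQo : ∀ τ ∈ ball (0:ℂ) (2/5 * (98/100 - ‖x0‖)), ∀ z ∈ unitHalfBall n, 98/100 ≤ ‖z‖ →
      1/1000000 ≤ (cQ (bv x0 τ) r z).re ∧ ‖cQ (bv x0 τ) r z‖ ≤ 20 := by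
    intro τ hτ z hz hz1
    have := mem_ball_zero_iff.1 hτ
    refine cQ_mem hr hr1 ?_ (hu1 z hz) (by linarith [hu2 z hz])
    linarith [hu3 z hz1]
  have hJb : ∀ τ ∈ ball (0:ℂ) (2/5 * (98/100 - ‖x0‖)), ∀ z ∈ unitHalfBall n,
      ‖cJ X φ (bv x0 τ) r z‖ ≤ 13 * (n + 1) * X.M * A := by
    intro τ hτ z hz
    have hτ' := mem_ball_zero_iff.1 hτ
    rcases lt_or_ge ‖z‖ (98/100) with h | h
    · obtain ⟨a, c⟩ := X.w z h
      have : cJ X φ (bv x0 τ) r z = 0 := by simp [cJ, a, c]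
      rw [this, norm_zero]; positivity
    · have hq := hQo τ hτ z hz h
      have ha := hA _ hq.1 hq.2
      exact cJ_bound X hA0.le ha.1 ha.2.1 (hvb z hz τ (by linarith))
  have gb : ∀ (z : Euc (n+1)) (w : ℂ) (B : ℝ), z ∈ unitHalfBall n → ‖w‖ ≤ B → ‖(g z : ℂ) * w‖ ≤ B := by
    intro z w B hz hw
    rw [norm_mul, Complex.norm_real, Real.norm_eq_abs]
    have := mul_le_mul (hg1 z hz) hw (norm_nonneg _) zero_le_one
    linarith
  have hgc : ContinuousOn (fun z => (g z : ℂ)) (unitHalfBall n) :=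
    Complex.continuous_ofReal.comp_continuousOn hg
  have hJc : ∀ τ ∈ ball (0:ℂ) (2/5 * (98/100 - ‖x0‖)),
      ContinuousOn (fun z => (g z : ℂ) * cJ X φ (bv x0 τ) r z) (unitHalfBall n) := by
    intro τ hτ
    exact hgc.mul (cJ_cont X hφ _ r fun z hz h => slit _ (hQo τ hτ z hz h).1)
  have hbd : ∀ τ ∈ ball (0:ℂ) (2/5 * (98/100 - ‖x0‖)), ‖FF X φ g x0 r τ‖ ≤
      V * (13 * (n + 1) * X.M * A) := by
    intro τ hτ
    exact hV _ _ (by positivity) fun z hz => gb z _ _ hz (hJb τ hτ z hz)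
  refine ⟨?_, ?_, ?_⟩
  · have : IsFiniteMeasure (volume.restrict (unitHalfBall n)) := ⟨by simpa using half_fin n⟩
    refine differentiableOn_integral (volume.restrict (unitHalfBall n))
      (f := fun τ z => (g z : ℂ) * cJ X φ (bv x0 τ) r z) (M := 13 * (n + 1) * X.M * A) ?_ ?_ ?_
    · intro τ hτ
      exact (hJc τ hτ).aestronglyMeasurable (isOpen_half n).measurableSet
    · refine (ae_restrict_iff' (isOpen_half n).measurableSet).2 (Eventually.of_forall ?_)
      intro z hz
      rcases lt_or_ge ‖z‖ (98/100) with h | h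
      · obtain ⟨a, c⟩ := X.w z h
        have : (fun τ => (g z : ℂ) * cJ X φ (bv x0 τ) r z) = fun _ => 0 := by
          funext τ; simp [cJ, a, c]
        rw [this]; exact differentiableOn_const _
      · have hQd : Differentiable ℂ (fun τ => cQ (bv x0 τ) r z) := by
          simp_rw [cQ_bv]; fun_prop
        have hbd : ∀ i, Differentiable ℂ (fun τ => bv x0 τ i) := by
          intro i
          unfold bv
          split_ifs <;> fun_prop
        intro τ hτ
        apply DifferentiableAt.differentiableWithinAt
        have hs := slit _ (hQo τ hτ z hz h).1
        have d0 : DifferentiableAt ℂ (fun τ => φ (cQ (bv x0 τ) r z)) τ :=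
          (hφ _ hs).differentiableAt.comp τ (hQd τ)
        have d1 : DifferentiableAt ℂ (fun τ => ph1 n (cQ (bv x0 τ) r z)) τ :=
          DifferentiableAt.comp (g := ph1 n) τ (ph1_deriv n hs).differentiableAt (hQd τ)
        unfold cJ
        refine DifferentiableAt.const_mul (DifferentiableAt.add (d0.const_mul _) (DifferentiableAt.mul ?_ d1)) _
        refine DifferentiableAt.const_mul (DifferentiableAt.fun_sum fun i _ => ?_) _
        exact ((hbd i τ).const_sub _).const_mul _
    · refine (ae_restrict_iff' (isOpen_half n).measurableSet).2 (Eventually.of_forall ?_)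
      intro z hz τ hτ
      exact gb z _ _ hz (hJb τ hτ z hz)
  · intro τ hτ
    have : 0 ≤ (X.M + 7) * A + V * (2 * (n + 1) * A) := by positivity
    linarith [hbd τ hτ]
  · intro K hK hG τ hτ
    have hτb : τ ∈ ball (0:ℂ) (2/5 * (98/100 - ‖x0‖)) := mem_ball_zero_iff.2 (by linarith)
    have hQ : ∀ z ∈ unitHalfBall n, 1/1000000 ≤ (cQ (bv x0 τ) r z).re ∧ ‖cQ (bv x0 τ) r z‖ ≤ 20 := by
      intro z hz
      exact cQ_mem hr hr1 (by linarith [hu1 z hz]) (hu1 z hz) (by linarith [hu2 z hz])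
    have hAz := fun z hz => hA _ (hQ z hz).1 (hQ z hz).2
    have hs := fun z hz => slit _ (hQ z hz).1
    have kg := kernel_green X hφ hG (bv x0 τ) r hs hA0.le (fun z hz => (hAz z hz).1)
      (fun z hz => (hAz z hz).2.1) (fun z hz => hvb z hz τ (by linarith) _)
    have bT : ∀ z ∈ unitHalfBall n, ‖(g z : ℂ) * ((X.c z : ℂ) * (2 * ((n : ℂ) + 1) * (r : ℂ) ^ 2 *
        ph2 n (cQ (bv x0 τ) r z)))‖ ≤ 2 * (n + 1) * A * r ^ 2 := by
      intro z hz
      apply gb z _ _ hz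
      rw [norm_mul, Complex.norm_real, Real.norm_eq_abs, abs_of_nonneg (X.c0 z)]
      have : ‖2 * ((n : ℂ) + 1) * (r : ℂ) ^ 2 * ph2 n (cQ (bv x0 τ) r z)‖ ≤ 2 * (n + 1) * A * r ^ 2 := by
        have e : ‖(n : ℂ) + 1‖ = n + 1 := by
          have := Complex.norm_natCast (n + 1)
          push_cast at this
          exact this
        rw [norm_mul, norm_mul, norm_mul, e, norm_pow, Complex.norm_real, Real.norm_eq_abs, abs_of_pos hr,
          Complex.norm_ofNat]
        have := mul_le_mul_of_nonneg_left (hAz z hz).2.2 (show 0 ≤ 2 * ((n:ℝ) + 1) * r ^ 2 by positivity)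
        linarith
      have := mul_le_mul (X.cle z) this (norm_nonneg _) zero_le_one
      linarith
    have cT : ContinuousOn (fun z => (g z : ℂ) * ((X.c z : ℂ) * (2 * ((n : ℂ) + 1) * (r : ℂ) ^ 2 *
        ph2 n (cQ (bv x0 τ) r z)))) (unitHalfBall n) := by
      refine hgc.mul (((Complex.continuous_ofReal.comp X.cc).continuousOn).mul
        (continuousOn_const.mul ?_))
      exact fun z hz =>
        ((ph2_cont n (hs z hz)).comp (cQ_cont (bv x0 τ) r).continuousAt).continuousWithinAt
    have iT := integrableOn_half cT bT
    have iJ := integrableOn_half (hJc τ hτb) fun z hz => gb z _ _ hz (hJb τ hτb z hz)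
    have esp : ∀ z, (g z : ℂ) * (cJ X φ (bv x0 τ) r z + (X.c z : ℂ) * (2 * ((n : ℂ) + 1) * (r : ℂ) ^ 2 *
        ph2 n (cQ (bv x0 τ) r z))) = (g z : ℂ) * cJ X φ (bv x0 τ) r z + (g z : ℂ) * ((X.c z : ℂ) *
        (2 * ((n : ℂ) + 1) * (r : ℂ) ^ 2 * ph2 n (cQ (bv x0 τ) r z))) := fun z => mul_add _ _ _
    simp_rw [esp] at kg
    rw [integral_add iJ iT] at kg
    have nT := hV _ _ (by positivity) bT
    have tri : ‖FF X φ g x0 r τ‖ ≤ K * ((X.M + 7) * A) + V * (2 * (n + 1) * A * r ^ 2) := by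
      unfold FF
      have := norm_sub_le ((∫ z in unitHalfBall n, (g z : ℂ) * cJ X φ (bv x0 τ) r z) +
        ∫ z in unitHalfBall n, (g z : ℂ) * ((X.c z : ℂ) * (2 * ((n : ℂ) + 1) * (r : ℂ) ^ 2 *
        ph2 n (cQ (bv x0 τ) r z)))) (∫ z in unitHalfBall n, (g z : ℂ) * ((X.c z : ℂ) *
        (2 * ((n : ℂ) + 1) * (r : ℂ) ^ 2 * ph2 n (cQ (bv x0 τ) r z))))
      rw [add_sub_cancel_right] at this
      refine this.trans ?_
      refine add_le_add (kg.trans (le_of_eq ?_)) nT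
      ring
    refine tri.trans ?_
    have p1 : 0 ≤ V * (13 * (n + 1) * X.M * A) * (K + r ^ 2) := by positivity
    have p2 : 0 ≤ (X.M + 7) * A * r ^ 2 := by positivity
    have p3 : 0 ≤ V * (2 * (n + 1) * A) * K := by positivity
    nlinarith



lemma rsq_pw (n : ℕ) {r : ℝ} (hr : 0 < r) : (r ^ 2) ^ (-pw n) = (r ^ (n+1))⁻¹ := by
  rw [Real.rpow_neg (by positivity)]
  congr 1
  rw [← Real.rpow_natCast r 2, ← Real.rpow_mul hr.le, ← Real.rpow_natCast r (n+1)]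
  congr 1
  simp only [pw]; push_cast; ring

/-- Approximate identity estimate. -/
lemma approx_id (n : ℕ) : ∃ cd : ℝ, 0 < cd ∧ ∃ C3 : ℝ, 0 < C3 ∧ ∀ (x : Euc (n+1)) (G : Euc (n+1) → ℝ)
    (H L r : ℝ), 0 < r → 0 ≤ L → Measurable G → (∀ z, |G z| ≤ 1) → (∀ z, |G z - H| ≤ L * ‖z - x‖) →
    |(∫ z, G z * (2 * ((n:ℝ)+1) * r ^ 2 * (‖z - x‖ ^ 2 + r ^ 2) ^ (-pw n - 1))) - cd * H| ≤ C3 * L * r := by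
  set w : Euc (n+1) → ℝ := fun v => 2 * ((n:ℝ)+1) * (1 + ‖v‖ ^ 2) ^ (-pw n - 1) with hw
  have hfr : Module.finrank ℝ (Euc (n+1)) = n + 1 := by simp
  have hwc : Continuous w := by
    refine continuous_const.mul (Continuous.rpow_const (by fun_prop) fun v => Or.inl ?_)
    positivity
  have hwpos : ∀ v, 0 < w v := fun v => by simp only [hw]; positivity
  have hwi : Integrable w := by
    have := integrable_rpow_neg_one_add_norm_sq (E := Euc (n+1)) (μ := volume)
      (r := (n:ℝ) + 3) (by rw [hfr]; push_cast; linarith)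
    have := this.const_mul (2 * ((n:ℝ)+1))
    refine this.congr (Eventually.of_forall fun v => ?_)
    simp only [hw, pw]
    congr 2
    ring
  have hvi : Integrable (fun v : Euc (n+1) => ‖v‖ * w v) := by
    have := integrable_rpow_neg_one_add_norm_sq (E := Euc (n+1)) (μ := volume)
      (r := (n:ℝ) + 2) (by rw [hfr]; push_cast; linarith)
    have := this.const_mul (2 * ((n:ℝ)+1))
    refine this.mono' (continuous_norm.mul hwc).aestronglyMeasurable (Eventually.of_forall fun v => ?_)
    have hp := hwpos v
    rw [Real.norm_eq_abs, abs_of_nonneg (by positivity)]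
    simp only [hw]
    have h1 : ‖v‖ ≤ (1 + ‖v‖ ^ 2) ^ ((1:ℝ)/2) := by
      rw [← Real.sqrt_eq_rpow]
      apply Real.le_sqrt_of_sq_le; linarith
    have h2 : (1 + ‖v‖ ^ 2) ^ (-((n:ℝ) + 2) / 2) =
        (1 + ‖v‖ ^ 2) ^ ((1:ℝ)/2) * (1 + ‖v‖ ^ 2) ^ (-pw n - 1) := by
      rw [← Real.rpow_add (by positivity)]
      congr 1
      simp only [pw]; ring
    rw [h2]
    have h3 : 0 ≤ 2 * ((n:ℝ)+1) * (1 + ‖v‖ ^ 2) ^ (-pw n - 1) := by positivity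
    have := mul_le_mul_of_nonneg_right h1 h3
    linarith
  have hcd : 0 < ∫ v, w v := by
    rw [integral_pos_iff_support_of_nonneg (fun v => (hwpos v).le) hwi]
    have : Function.support w = univ := by
      ext v; simp [(hwpos v).ne']
    rw [this]
    exact Measure.measure_univ_pos.2 (NeZero.ne _)
  have hC3 : 0 ≤ ∫ v, ‖v‖ * w v := integral_nonneg fun v => mul_nonneg (norm_nonneg _) (hwpos v).le
  refine ⟨∫ v, w v, hcd, (∫ v, ‖v‖ * w v) + 1, by positivity, ?_⟩
  intro x G H L r hr hL hGm hG1 hGL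
  set f : Euc (n+1) → ℝ := fun z =>
    G z * (2 * ((n:ℝ)+1) * r ^ 2 * (‖z - x‖ ^ 2 + r ^ 2) ^ (-pw n - 1)) with hf
  have e1 : ∫ z, f z = ∫ v, G (x + r • v) * w v := by
    have a1 : ∫ z, f z = ∫ z, f (x + z) := (integral_add_left_eq_self f x).symm
    have a2 := Measure.integral_comp_smul (volume : Measure (Euc (n+1))) (fun z => f (x + z)) r
    rw [hfr, abs_of_pos (by positivity), smul_eq_mul] at a2
    have a3 : ∀ v, f (x + r • v) = (r ^ (n+1))⁻¹ * (G (x + r • v) * w v) := by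
      intro v
      simp only [hf, hw]
      have b1 : ‖x + r • v - x‖ ^ 2 + r ^ 2 = r ^ 2 * (1 + ‖v‖ ^ 2) := by
        rw [add_sub_cancel_left, norm_smul, Real.norm_eq_abs, abs_of_pos hr]; ring
      rw [b1, Real.mul_rpow (by positivity) (by positivity), ← rsq_pw n hr,
        Real.rpow_sub_one (show (r ^ 2) ≠ 0 by positivity)]
      field_simp
    simp_rw [a3] at a2
    rw [integral_const_mul] at a2
    rw [a1]
    have : (r ^ (n+1))⁻¹ ≠ 0 := by positivity
    exact (mul_left_cancel₀ this a2).symm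
  have hGi : Integrable (fun v => G (x + r • v) * w v) := by
    refine hwi.bdd_mul (c := 1) ?_ (Eventually.of_forall fun v => hG1 _)
    exact (hGm.comp (by fun_prop)).aestronglyMeasurable
  rw [e1]
  have e2 : (∫ v, G (x + r • v) * w v) - (∫ v, w v) * H = ∫ v, (G (x + r • v) - H) * w v := by
    rw [← integral_mul_const, ← integral_sub hGi (hwi.mul_const _)]
    congr 1
    funext v; ring
  rw [e2]
  have := norm_integral_le_of_norm_le (f := fun v => (G (x + r • v) - H) * w v)
    (hvi.const_mul (L * r)) (Eventually.of_forall fun v => by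
      rw [norm_mul, Real.norm_eq_abs, Real.norm_eq_abs, abs_of_pos (hwpos v)]
      have h1 := hGL (x + r • v)
      rw [add_sub_cancel_left, norm_smul, Real.norm_eq_abs, abs_of_pos hr] at h1
      have := mul_le_mul_of_nonneg_right h1 (hwpos v).le
      linarith)
  rw [Real.norm_eq_abs, integral_const_mul] at this
  refine this.trans ?_
  have : 0 ≤ L * r := by positivity
  nlinarith

lemma ph1_norm (n : ℕ) {ζ : ℂ} {r : ℝ} (hr : 0 < r) (h : r ^ 2 ≤ ‖ζ‖) :
    ‖ph1 n ζ‖ ≤ (r ^ 2) ^ (-pw n) := by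
  unfold ph1
  rw [← Complex.ofReal_neg, Complex.norm_cpow_real]
  apply Real.rpow_le_rpow_of_nonpos (by positivity) h
  simp only [pw]
  have : (0:ℝ) ≤ ((n:ℝ)+1)/2 := by positivity
  linarith

lemma ph2_norm (n : ℕ) {ζ : ℂ} {r : ℝ} (hr : 0 < r) (h : r ^ 2 ≤ ‖ζ‖) :
    ‖ph2 n ζ‖ ≤ (r ^ 2) ^ (-pw n - 1) := by
  unfold ph2
  have : (-(pw n : ℂ) - 1) = ((-pw n - 1 : ℝ) : ℂ) := by push_cast; ring
  rw [this, Complex.norm_cpow_real]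
  apply Real.rpow_le_rpow_of_nonpos (by positivity) h
  simp only [pw]
  have : (0:ℝ) ≤ ((n:ℝ)+1)/2 := by positivity
  linarith

lemma phi_bound (n : ℕ) {φ : ℂ → ℂ}
    (hφ : ∀ ζ ∈ Complex.slitPlane, HasDerivAt φ (ph1 n ζ) ζ) : ∃ D : ℝ, 1 ≤ D ∧ ∀ (r q : ℝ), 0 < r →
    r ≤ 1 → r ^ 2 ≤ q → q ≤ 20 → ‖φ (q : ℂ)‖ ≤ D * (r ^ 2) ^ (-pw n) := by
  refine ⟨‖φ (20 : ℂ)‖ + 20, by linarith [norm_nonneg (φ 20)], fun r q hr hr1 h1 h2 => ?_⟩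
  set s : Set ℂ := {ζ | r ^ 2 ≤ ζ.re} with hs
  have hsl : ∀ ζ ∈ s, ζ ∈ Complex.slitPlane := fun ζ hζ => Or.inl (lt_of_lt_of_le (by positivity) hζ)
  have key := Convex.norm_image_sub_le_of_norm_hasDerivWithin_le (f := φ) (f' := ph1 n) (s := s)
    (x := (20 : ℂ)) (y := (q : ℂ)) (C := (r ^ 2) ^ (-pw n))
    (fun ζ hζ => (hφ ζ (hsl ζ hζ)).hasDerivWithinAt)
    (fun ζ hζ => ph1_norm n hr (le_trans hζ (Complex.re_le_norm ζ)))
    (convex_halfSpace_re_ge _) (by show r ^ 2 ≤ (20 : ℂ).re; simp; nlinarith) (by show r ^ 2 ≤ (q : ℂ).re; simpa using h1)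
  have hq : ‖(q : ℂ) - 20‖ ≤ 20 := by
    have : (q : ℂ) - 20 = ((q - 20 : ℝ) : ℂ) := by push_cast; ring
    rw [this, Complex.norm_real, Real.norm_eq_abs, abs_le]
    constructor <;> nlinarith [sq_nonneg r]
  have hone : 1 ≤ (r ^ 2) ^ (-pw n) := by
    rw [rsq_pw n hr]
    exact (one_le_inv₀ (by positivity)).2 (pow_le_one₀ hr.le hr1)
  have t := norm_add_le (φ q - φ 20) (φ 20)
  rw [sub_add_cancel] at t
  have := mul_le_mul_of_nonneg_left hq (show 0 ≤ (r ^ 2) ^ (-pw n) by positivity)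
  have := mul_le_mul_of_nonneg_left hone (norm_nonneg (φ 20))
  nlinarith

lemma cQ_real {n : ℕ} (x : Euc (n+1)) (r : ℝ) (z : Euc (n+1)) :
    cQ (bv x 0) r z = ((‖z - x‖ ^ 2 + r ^ 2 : ℝ) : ℂ) := by
  rw [cQ_bv]; push_cast; ring

lemma FF_point {n : ℕ} (X : Cutoff n) {φ : ℂ → ℂ}
    (hφ : ∀ ζ ∈ Complex.slitPlane, HasDerivAt φ (ph1 n ζ) ζ) :
    ∃ cd : ℝ, 0 < cd ∧ ∃ C2 : ℝ, 0 < C2 ∧ ∀ (x x0 : Euc (n+1)) (τ : ℂ) (r K H L : ℝ) (g : Euc (n+1) → ℝ),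
      ‖x‖ < 1/3 → 0 < lastc x → bv x0 τ = bv x 0 → 0 < r → r ≤ 1 → ContinuousOn g (unitHalfBall n) →
      (∀ z ∈ unitHalfBall n, |g z| ≤ 1) → 0 ≤ K → GreenProp n g K → |H| ≤ 1 →
      (∀ z ∈ unitHalfBall n, |X.c z * g z - H| ≤ L * ‖z - x‖) → 2 ≤ L → 1 ≤ L * lastc x →
      cd * |H| ≤ ‖FF X φ g x0 r τ‖ + C2 * (K * (r ^ 2) ^ (-pw n) + L * r) := by
  obtain ⟨cd, hcd, C3, hC3, happ⟩ := approx_id n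
  obtain ⟨D, hD, hphi⟩ := phi_bound n hφ
  have hM := X.hM
  refine ⟨cd, hcd, (X.M + 7) * D + C3, by positivity, ?_⟩
  intro x x0 τ r K H L g hx hxl hbv hr hr1 hg hg1 hK hG hH hL hL2 hL1
  set U := unitHalfBall n with hU
  have hUm : MeasurableSet U := (isOpen_half n).measurableSet
  unfold FF
  rw [hbv]
  set b := bv x 0 with hb
  have hu2 : ∀ z ∈ U, ‖z - x‖ ≤ 4/3 := fun z hz => by
    linarith [norm_sub_le z x, hz.1]
  have hq0 : ∀ z, r ^ 2 ≤ ‖z - x‖ ^ 2 + r ^ 2 := fun z => by linarith [sq_nonneg ‖z - x‖]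
  have hq1 : ∀ z ∈ U, ‖z - x‖ ^ 2 + r ^ 2 ≤ 20 := fun z hz => by
    have := hu2 z hz
    nlinarith [norm_nonneg (z - x)]
  have hr2 : 0 < r ^ 2 := by positivity
  have hqn : ∀ z, ‖cQ b r z‖ = ‖z - x‖ ^ 2 + r ^ 2 := fun z => by
    rw [cQ_real, Complex.norm_real, Real.norm_eq_abs, abs_of_pos (by linarith [hq0 z])]
  have hs : ∀ z ∈ U, cQ b r z ∈ Complex.slitPlane := fun z hz => by
    rw [cQ_real, Complex.ofReal_mem_slitPlane]; linarith [hq0 z]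
  set ρ := (r ^ 2) ^ (-pw n) with hρ
  have hρ0 : 0 < ρ := by positivity
  have hA1 : ∀ z ∈ U, ‖φ (cQ b r z)‖ ≤ D * ρ := fun z hz => by
    rw [cQ_real]; exact hphi r _ hr hr1 (hq0 z) (hq1 z hz)
  have hA2 : ∀ z ∈ U, ‖ph1 n (cQ b r z)‖ ≤ D * ρ := fun z hz => by
    have := ph1_norm n hr (by rw [hqn]; exact hq0 z : r ^ 2 ≤ ‖cQ b r z‖)
    nlinarith
  have hv : ∀ z ∈ U, ∀ i, ‖(z i : ℂ) - b i‖ ≤ 3 := by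
    intro z hz i
    have e : (z i : ℂ) - b i = (((z - x) i : ℝ) : ℂ) := by simp [hb, bv]
    rw [e, Complex.norm_real]
    linarith [PiLp.norm_apply_le (z - x) i, hu2 z hz]
  have kg := kernel_green X hφ hG b r hs (by positivity) hA1 hA2 (fun z hz => hv z hz _)
  have gb : ∀ (z : Euc (n+1)) (w : ℂ) (B : ℝ), z ∈ U → ‖w‖ ≤ B → ‖(g z : ℂ) * w‖ ≤ B := by
    intro z w B hz hw
    rw [norm_mul, Complex.norm_real, Real.norm_eq_abs]
    have := mul_le_mul (hg1 z hz) hw (norm_nonneg _) zero_le_one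
    linarith
  have hgc : ContinuousOn (fun z => (g z : ℂ)) U :=
    Complex.continuous_ofReal.comp_continuousOn hg
  have iJ : IntegrableOn (fun z => (g z : ℂ) * cJ X φ b r z) U :=
    integrableOn_half (hgc.mul (cJ_cont X hφ b r fun z hz _ => hs z hz))
      fun z hz => gb z _ _ hz (cJ_bound X (by positivity) (hA1 z hz) (hA2 z hz) (hv z hz))
  -- the second term, in real form
  set k : Euc (n+1) → ℝ := fun z => 2 * ((n:ℝ)+1) * r ^ 2 * (‖z - x‖ ^ 2 + r ^ 2) ^ (-pw n - 1) with hk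
  have eT : ∀ z, (g z : ℂ) * ((X.c z : ℂ) * (2 * ((n : ℂ) + 1) * (r : ℂ) ^ 2 * ph2 n (cQ b r z))) =
      ((X.c z * g z * k z : ℝ) : ℂ) := by
    intro z
    have e : ph2 n (cQ b r z) = (((‖z - x‖ ^ 2 + r ^ 2) ^ (-pw n - 1) : ℝ) : ℂ) := by
      rw [cQ_real, Complex.ofReal_cpow (by linarith [hq0 z])]
      unfold ph2
      push_cast
      rfl
    rw [e]
    simp only [hk]
    push_cast
    ring
  have kc : Continuous k := by
    refine continuous_const.mul (Continuous.rpow_const (by fun_prop) fun v => Or.inl ?_)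
    have := hq0 v
    linarith
  have iT : IntegrableOn (fun z => (((X.c z * g z * k z : ℝ)) : ℂ)) U := by
    refine integrableOn_half (M := 2 * ((n:ℝ)+1) * r ^ 2 * (r ^ 2) ^ (-pw n - 1)) ?_ ?_
    · exact Complex.continuous_ofReal.comp_continuousOn ((X.cc.continuousOn.mul hg).mul kc.continuousOn)
    · intro z hz
      rw [← eT]
      apply gb z _ _ hz
      have h2 := ph2_norm n hr (by rw [hqn]; exact hq0 z : r ^ 2 ≤ ‖cQ b r z‖)
      have e : ‖(n : ℂ) + 1‖ = n + 1 := by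
        have := Complex.norm_natCast (n + 1)
        push_cast at this
        exact this
      rw [norm_mul, norm_mul, norm_mul, norm_mul, e, norm_pow, Complex.norm_real, Complex.norm_real,
        Real.norm_eq_abs, Real.norm_eq_abs, abs_of_pos hr, Complex.norm_ofNat, abs_of_nonneg (X.c0 z)]
      have t1 := mul_le_mul_of_nonneg_left h2 (show 0 ≤ 2 * ((n:ℝ) + 1) * r ^ 2 by positivity)
      have t2 := mul_le_mul (X.cle z) t1 (by positivity) zero_le_one
      linarith
  have esp : ∀ z, (g z : ℂ) * (cJ X φ b r z + (X.c z : ℂ) * (2 * ((n : ℂ) + 1) * (r : ℂ) ^ 2 *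
      ph2 n (cQ b r z))) = (g z : ℂ) * cJ X φ b r z + (((X.c z * g z * k z : ℝ)) : ℂ) := fun z => by
    rw [mul_add, eT]
  simp_rw [esp] at kg
  rw [integral_add iJ iT] at kg
  have eR : ∫ z in U, (((X.c z * g z * k z : ℝ)) : ℂ) = ((∫ z in U, X.c z * g z * k z : ℝ) : ℂ) :=
    integral_ofReal
  classical
  set G : Euc (n+1) → ℝ := U.piecewise (fun z => X.c z * g z) (fun _ => 0) with hGdef
  have hGm : Measurable G :=
    ContinuousOn.measurable_piecewise (X.cc.continuousOn.mul hg) continuousOn_const hUm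
  have eI : ∫ z in U, X.c z * g z * k z = ∫ z, G z * k z := by
    rw [← integral_indicator hUm]
    congr 1
    funext z
    by_cases hz : z ∈ U
    · rw [indicator_of_mem hz, hGdef, piecewise_eq_of_mem _ _ _ hz]
    · rw [indicator_of_notMem hz, hGdef, piecewise_eq_of_notMem _ _ _ hz, zero_mul]
  have happ' := happ x G H L r hr (by linarith) hGm ?_ ?_
  · rw [eR, eI] at kg
    have h1 : ‖((∫ z, G z * k z : ℝ) : ℂ)‖ ≤ ‖∫ z in U, (g z : ℂ) * cJ X φ b r z‖ +
        K * ((X.M + 7) * (D * ρ)) := by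
      have := norm_sub_le ((∫ z in U, (g z : ℂ) * cJ X φ b r z) + ((∫ z, G z * k z : ℝ) : ℂ))
        (∫ z in U, (g z : ℂ) * cJ X φ b r z)
      rw [add_sub_cancel_left] at this
      linarith
    rw [Complex.norm_real, Real.norm_eq_abs] at h1
    have h2 : cd * |H| ≤ |∫ z, G z * k z| + C3 * L * r := by
      have : cd * |H| = |cd * H| := by rw [abs_mul, abs_of_pos hcd]
      rw [this]
      have t := abs_sub_abs_le_abs_sub (cd * H) (∫ z, G z * k z)
      rw [abs_sub_comm] at t
      linarith
    have p1 : 0 ≤ C3 * (K * ρ) := by positivity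
    have p2 : 0 ≤ (X.M + 7) * D * (L * r) := by
      have : 0 ≤ L := by linarith
      positivity
    nlinarith
  · intro z
    by_cases hz : z ∈ U
    · rw [hGdef, piecewise_eq_of_mem _ _ _ hz, abs_mul, abs_of_nonneg (X.c0 z)]
      have := mul_le_mul (X.cle z) (hg1 z hz) (abs_nonneg _) zero_le_one
      linarith
    · rw [hGdef, piecewise_eq_of_notMem _ _ _ hz]; simp
  · intro z
    by_cases hz : z ∈ U
    · rw [hGdef, piecewise_eq_of_mem _ _ _ hz]; exact hL z hz
    · rw [hGdef, piecewise_eq_of_notMem _ _ _ hz, zero_sub, abs_neg]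
      refine hH.trans ?_
      rcases lt_or_ge ‖z‖ 1 with h1 | h1
      · have h2 : lastc z ≤ 0 := by
          by_contra hcon
          exact hz ⟨h1, not_le.1 hcon⟩
        have h3 : |lastc z - lastc x| ≤ ‖z - x‖ := by
          simpa [lastc] using PiLp.norm_apply_le (z - x) (Fin.last n)
        have h4 : lastc x ≤ ‖z - x‖ := by
          linarith [neg_abs_le (lastc z - lastc x)]
        refine hL1.trans (mul_le_mul_of_nonneg_left h4 (by linarith))
      · have : 2/3 ≤ ‖z - x‖ := by linarith [norm_sub_norm_le z x]
        nlinarith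



lemma lip_half {n : ℕ} {h : Euc (n+1) → ℝ} (hd : HarmonicOn h (unitHalfBall n))
    (hg : ∀ y ∈ unitHalfBall n, ‖fderiv ℝ h y‖ ≤ 1) {x y : Euc (n+1)}
    (hx : x ∈ unitHalfBall n) (hy : y ∈ unitHalfBall n) : |h y - h x| ≤ ‖y - x‖ := by
  have := (convex_half n).norm_image_sub_le_of_norm_fderiv_le (𝕜 := ℝ) (f := h) (C := 1)
    (fun z hz => ((hd.1.differentiableOn (by norm_num)) z hz).differentiableAt
      ((isOpen_half n).mem_nhds hz)) hg hx hy
  simpa using this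

lemma norm_sub_last {n : ℕ} (x : Euc (n+1)) (s : ℝ) :
    ‖x - s • EuclideanSpace.single (Fin.last n) (1:ℝ)‖ ^ 2 = ‖x‖ ^ 2 - 2 * s * lastc x + s ^ 2 := by
  rw [norm_sub_sq_real, inner_smul_right, norm_smul]
  simp [EuclideanSpace.inner_single_right, lastc]
  ring

lemma lastc_sub_last {n : ℕ} (x : Euc (n+1)) (s : ℝ) :
    lastc (x - s • EuclideanSpace.single (Fin.last n) (1:ℝ)) = lastc x - s := by
  simp [lastc]

lemma near_flat {n : ℕ} {h : Euc (n+1) → ℝ} {ε : ℝ} (hd : HarmonicOn h (unitHalfBall n))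
    (hc : ContDiffOn ℝ 1 h (closure (unitHalfBall n)))
    (hg : ∀ y ∈ unitHalfBall n, ‖fderiv ℝ h y‖ ≤ 1) (hf : ∀ y ∈ flatFace n, |h y| ≤ ε)
    {x : Euc (n+1)} (hx : x ∈ unitHalfBall n) : |h x| ≤ ε + lastc x := by
  set e : Euc (n+1) := EuclideanSpace.single (Fin.last n) (1:ℝ) with he
  set t := lastc x with ht
  have ht0 : 0 < t := hx.2
  have hen : ‖e‖ = 1 := by simp [he]
  have hle : ∀ s, 0 ≤ s → s ≤ t → ‖x - s • e‖ ≤ ‖x‖ := by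
    intro s h0 h1
    refine (pow_le_pow_iff_left₀ (norm_nonneg _) (norm_nonneg _) two_ne_zero).1 ?_
    rw [norm_sub_last]
    nlinarith
  have hmem : ∀ s ∈ Ico 0 t, x - s • e ∈ unitHalfBall n := by
    intro s hs
    refine ⟨(hle s hs.1 hs.2.le).trans_lt hx.1, ?_⟩
    rw [lastc_sub_last]; linarith [hs.2]
  have hcl : Tendsto (fun s : ℝ => x - s • e) (𝓝[<] t) (𝓝[closure (unitHalfBall n)] (x - t • e)) := by
    apply tendsto_nhdsWithin_of_tendsto_nhds_of_eventually_within
    · have : Continuous (fun s : ℝ => x - s • e) := by fun_prop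
      exact (this.tendsto t).mono_left nhdsWithin_le_nhds
    · filter_upwards [Ico_mem_nhdsLT ht0] with s hs
      exact subset_closure (hmem s hs)
  have hycl : x - t • e ∈ closure (unitHalfBall n) := by
    have : Continuous (fun s : ℝ => x - s • e) := by fun_prop
    refine mem_closure_of_tendsto ((this.tendsto t).mono_left (nhdsWithin_le_nhds (s := Iio t))) ?_
    filter_upwards [Ico_mem_nhdsLT ht0] with s hs using hmem s hs
  have hT : Tendsto (fun s : ℝ => |h x - h (x - s • e)|) (𝓝[<] t) (𝓝 |h x - h (x - t • e)|) := by
    have := ((hc.continuousOn) _ hycl).tendsto.comp hcl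
    exact (tendsto_const_nhds.sub this).abs
  have h1 : |h x - h (x - t • e)| ≤ t := by
    refine le_of_tendsto hT ?_
    filter_upwards [Ico_mem_nhdsLT ht0] with s hs
    refine (lip_half hd hg (hmem s hs) hx).trans ?_
    rw [sub_sub_cancel, norm_smul, hen, mul_one, Real.norm_of_nonneg hs.1]
    exact hs.2.le
  have h2 : |h (x - t • e)| ≤ ε := by
    apply hf
    refine ⟨(hle t ht0.le le_rfl).trans hx.1.le, ?_⟩
    rw [lastc_sub_last]; simp [ht]
  have := abs_sub_abs_le_abs_sub (h x) (h (x - t • e))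
  linarith

set_option maxHeartbeats 1600000 in
/-- The bound away from the flat face, before choosing `r`. -/
lemma far_bound (n : ℕ) : ∃ γ : ℝ, 0 < γ ∧ γ < 1 ∧ ∃ A : ℝ, 0 < A ∧
      ∀ (h : Euc (n + 1) → ℝ) (ε r : ℝ), 0 < ε → 0 < r → r ≤ 1 →
      HarmonicOn h (unitHalfBall n) →
      ContDiffOn ℝ 1 h (closure (unitHalfBall n)) →
      (∀ y ∈ unitHalfBall n, |h y| ≤ 1) →
      (∀ y ∈ unitHalfBall n, ‖fderiv ℝ h y‖ ≤ 1) →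
      (∀ y ∈ flatFace n, |h y| ≤ ε) →
      (∀ y ∈ flatFace n,
        |fderivWithin ℝ h (closure (unitHalfBall n)) y
          (EuclideanSpace.single (Fin.last n) 1)| ≤ ε) →
      ∀ x : Euc (n + 1), ‖x‖ < 1 / 3 → 0 < lastc x →
        |h x| ≤ A * ((A * ε + r ^ 2) ^ γ + ε * (r ^ (n+1))⁻¹ + r / lastc x) := by
  obtain ⟨X⟩ := exists_cutoff n
  obtain ⟨φ, hφ⟩ := exists_phi (pw n)
  have hφ' : ∀ ζ ∈ Complex.slitPlane, HasDerivAt φ (ph1 n ζ) ζ := hφ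
  obtain ⟨CG, hCG, green⟩ := green_bound n
  obtain ⟨C1, hC1, hFB⟩ := FF_bounds X hφ'
  obtain ⟨cd, hcd, C2, hC2, hFP⟩ := FF_point X hφ'
  obtain ⟨γ, hγ, hγ1, C', hC', h3⟩ := three_circles (1/500) (by norm_num) (by norm_num)
  refine ⟨γ, hγ, hγ1, CG + (C1 * C' + C2 * CG + 4 * C2) / cd, by positivity, ?_⟩
  intro h ε r hε hr hr1 hd hc hb hg hf1 hf2 x hx hxl
  set t := lastc x with ht
  set A := CG + (C1 * C' + C2 * CG + 4 * C2) / cd with hA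
  have hxU : x ∈ unitHalfBall n := ⟨by linarith, hxl⟩
  set e : Euc (n+1) := EuclideanSpace.single (Fin.last n) (1:ℝ) with he
  have htx : t ≤ ‖x‖ := by
    have := PiLp.norm_apply_le x (Fin.last n)
    exact (le_abs_self _).trans this
  obtain ⟨θ, hθc, hθ01, hθ1, hG⟩ := green h ε (t/2) hε (by positivity) hd hc hf1 hf2
  set g : Euc (n+1) → ℝ := fun z => θ (lastc z) * h z with hgdef
  have hGP : GreenProp n g (CG * ε) := hG
  have hgc : ContinuousOn g (unitHalfBall n) :=
    (hθc.comp continuous_lastc).continuousOn.mul hd.1.continuousOn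
  have hg1 : ∀ z ∈ unitHalfBall n, |g z| ≤ 1 := by
    intro z hz
    simp only [hgdef, abs_mul]
    have := hθ01 (lastc z)
    rw [abs_of_nonneg this.1]
    exact mul_le_one₀ this.2 (abs_nonneg _) (hb z hz)
  have hlip : ∀ z ∈ unitHalfBall n, |X.c z * g z - h x| ≤ 4 / t * ‖z - x‖ := by
    intro z hz
    have hLt : 4 / t * (t / 2) = 2 := by field_simp; norm_num
    have hL12 : 12 ≤ 4 / t := by rw [le_div_iff₀ hxl]; linarith
    have htriv : |X.c z * g z - h x| ≤ 2 := by
      have h1 : |X.c z * g z| ≤ 1 := by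
        rw [abs_mul, abs_of_nonneg (X.c0 z)]
        exact mul_le_one₀ (X.cle z) (abs_nonneg _) (hg1 z hz)
      have := abs_sub (X.c z * g z) (h x)
      linarith [hb x hxU]
    by_cases h1 : lastc z < t / 2
    · have h2 : t / 2 ≤ ‖z - x‖ := by
        have := PiLp.norm_apply_le (z - x) (Fin.last n)
        have h3 : (z - x) (Fin.last n) = lastc z - t := by simp [lastc, ht]
        rw [h3, Real.norm_eq_abs] at this
        have := neg_le_abs (lastc z - t)
        linarith
      have : 4 / t * (t / 2) ≤ 4 / t * ‖z - x‖ := by gcongr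
      linarith
    by_cases h2 : ‖z‖ ≤ 98/100
    · have : X.c z * g z = h z := by
        simp only [hgdef]; rw [X.one z h2, hθ1 _ (not_lt.1 h1)]; ring
      rw [this]
      have := lip_half hd hg hxU hz
      nlinarith [norm_nonneg (z - x)]
    · have := norm_sub_norm_le z x
      push Not at h2
      have h5 : 1/2 ≤ ‖z - x‖ := by linarith
      nlinarith
  set x0 : Euc (n+1) := x - (t + 1/200) • e with hx0
  have hx0l : lastc x0 = -(1/200) := by rw [hx0, lastc_sub_last]; ring
  have hx0n : ‖x0‖ ^ 2 = ‖x‖ ^ 2 - t ^ 2 + (1/200) ^ 2 := by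
    rw [hx0, norm_sub_last]; ring
  have hx0p := norm_nonneg x0
  have hsq : ‖x‖ ^ 2 < 1/9 := by nlinarith [norm_nonneg x]
  have hx0h : ‖x0‖ ≤ 1/2 := by nlinarith
  have hgeo : t + 1/200 ≤ 95/100 * (2/5 * (98/100 - ‖x0‖)) := by
    nlinarith [sq_nonneg (‖x0‖ - 38/100 * t), sq_nonneg (t + 38/100 * ‖x0‖)]
  set R0 := 2/5 * (98/100 - ‖x0‖) with hR0
  have hR0p : 0 < R0 := by linarith
  have hR01 : R0 ≤ 1 := by linarith
  have hbv : bv x0 ((t + 1/200 : ℝ) : ℂ) = bv x 0 := by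
    funext i
    simp only [bv, hx0, he, PiLp.sub_apply, PiLp.smul_apply, PiLp.single_apply, smul_eq_mul]
    split_ifs <;> push_cast <;> ring
  obtain ⟨hFd, hFb, hFs⟩ := hFB x0 r g hx0h hx0l hr hr1 hgc hg1
  have hFs' := hFs (CG * ε) (by positivity) hGP
  have hpt := hFP x x0 ((t + 1/200 : ℝ) : ℂ) r (CG * ε) (h x) (4 / t) g hx hxl hbv hr hr1 hgc hg1
    (by positivity) hGP (hb x hxU) hlip (by rw [le_div_iff₀ hxl]; linarith)
    (by rw [← ht]; field_simp; norm_num)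
  have hin : ∀ w : ℂ, ‖w‖ < 1 → (R0 : ℂ) * w ∈ ball (0:ℂ) R0 := by
    intro w hw
    rw [mem_ball_zero_iff, norm_mul, Complex.norm_real, Real.norm_of_nonneg hR0p.le]
    nlinarith
  have h3' := h3 (fun w => FF X φ g x0 r (R0 * w) / C1) (CG * ε + r ^ 2) (by positivity)
    (by
      apply DifferentiableOn.div_const
      apply hFd.comp (by fun_prop)
      intro w hw
      exact hin w (mem_ball_zero_iff.1 hw))
    (by
      intro w hw
      rw [norm_div, Complex.norm_real, Real.norm_of_nonneg hC1.le, div_le_one hC1]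
      exact hFb _ (hin w (mem_ball_zero_iff.1 hw)))
    (by
      intro w hw
      rw [norm_div, Complex.norm_real, Real.norm_of_nonneg hC1.le, div_le_iff₀ hC1, mul_comm _ C1]
      apply hFs'
      rw [norm_mul, Complex.norm_real, Real.norm_of_nonneg hR0p.le]
      have := mem_ball_zero_iff.1 hw
      nlinarith [norm_nonneg w])
    (((t + 1/200) / R0 : ℝ) : ℂ)
    (by
      rw [Complex.norm_real, Real.norm_of_nonneg (by positivity), div_le_iff₀ hR0p]
      exact hgeo)
  have hmul : (R0 : ℂ) * (((t + 1/200) / R0 : ℝ) : ℂ) = ((t + 1/200 : ℝ) : ℂ) := by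
    rw [← Complex.ofReal_mul]; congr 1; field_simp
  simp only [hmul] at h3'
  rw [norm_div, Complex.norm_real, Real.norm_of_nonneg hC1.le, div_le_iff₀ hC1] at h3'
  rw [rsq_pw n hr] at hpt
  have hAC : CG ≤ A := by rw [hA]; have : 0 < (C1 * C' + C2 * CG + 4 * C2) / cd := by positivity
                          linarith
  have hmono : (CG * ε + r ^ 2) ^ γ ≤ (A * ε + r ^ 2) ^ γ := by
    apply Real.rpow_le_rpow (by positivity) _ hγ.le
    gcongr
  have hA' : C1 * C' + C2 * CG + 4 * C2 ≤ cd * A := by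
    rw [hA, mul_add, mul_div_cancel₀ _ hcd.ne']
    have : 0 < cd * CG := by positivity
    linarith
  set u := (A * ε + r ^ 2) ^ γ with hu
  set v := ε * (r ^ (n+1))⁻¹ with hv
  set w := r / t with hw
  have hA0 : 0 < A := hCG.trans_le hAC
  have hu0 : 0 ≤ u := by positivity
  have hv0 : 0 ≤ v := by positivity
  have hw0 : 0 ≤ w := by positivity
  have e1 : CG * ε * (r ^ (n+1))⁻¹ + 4 / t * r = CG * v + 4 * w := by
    rw [hv, hw]; ring
  rw [e1] at hpt
  have hfin : cd * |h x| ≤ cd * (A * (u + v + w)) := by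
    have s1 : C' * (CG * ε + r ^ 2) ^ γ * C1 ≤ C' * u * C1 := by gcongr
    have s2 : (C1 * C' + C2 * CG + 4 * C2) * (u + v + w) ≤ cd * A * (u + v + w) := by gcongr
    have p1 : 0 ≤ C1 * C' := by positivity
    have p2 : 0 ≤ C2 * CG := by positivity
    have q1 := mul_nonneg p1 hv0
    have q2 := mul_nonneg p1 hw0
    have q3 := mul_nonneg p2 hu0
    have q4 := mul_nonneg p2 hw0
    have q5 := mul_nonneg hC2.le hu0
    have q6 := mul_nonneg hC2.le hv0
    nlinarith
  exact le_of_mul_le_mul_left hfin hcd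

/-- Propagation of smallness from the flat part of the boundary
(Alessandrini–Rondi–Rosset–Vessella): if `h` is harmonic and bounded with bounded
gradient in the half-ball and both `h` and its normal derivative are `≤ ε` on the
flat face, then `|h| ≤ C ε^γ` on the half-ball of radius `1/3`. -/
theorem propagation_of_smallness {n : ℕ} :
    ∃ γ : ℝ, 0 < γ ∧ γ < 1 ∧ ∃ C : ℝ, 0 < C ∧
      ∀ (h : Euc (n + 1) → ℝ) (ε : ℝ), 0 < ε →
      HarmonicOn h (unitHalfBall n) →
      ContDiffOn ℝ 1 h (closure (unitHalfBall n)) →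
      (∀ y ∈ unitHalfBall n, |h y| ≤ 1) →
      (∀ y ∈ unitHalfBall n, ‖fderiv ℝ h y‖ ≤ 1) →
      (∀ y ∈ flatFace n, |h y| ≤ ε) →
      (∀ y ∈ flatFace n,
        |fderivWithin ℝ h (closure (unitHalfBall n)) y
          (EuclideanSpace.single (Fin.last n) 1)| ≤ ε) →
      ∀ x : Euc (n + 1), ‖x‖ < 1 / 3 → 0 < lastc x → |h x| ≤ C * ε ^ γ := by
  obtain ⟨γ', hγ', hγ1', A, hA, far⟩ := far_bound n
  set d : ℝ := (n:ℝ) + 1 with hd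
  have hd1 : 1 ≤ d := by have : (0:ℝ) ≤ n := Nat.cast_nonneg n
                         linarith
  have hd0 : 0 < d := by linarith
  set γ : ℝ := min (γ' / d) (1 / (4 * d)) with hγ
  have hγ0 : 0 < γ := by positivity
  have hγ4 : γ ≤ 1 / (4 * d) := min_le_right _ _
  have hγa : γ ≤ γ' / d := min_le_left _ _
  have hq : 1 / (4 * d) ≤ 1 / 4 := by
    apply one_div_le_one_div_of_le <;> linarith
  refine ⟨γ, hγ0, by linarith, 2 + A * ((A + 1) ^ γ' + 1 + 1), by positivity, ?_⟩
  intro h ε hε hh hc hb hg hf1 hf2 x hx hxl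
  have hxU : x ∈ unitHalfBall n := ⟨by linarith, hxl⟩
  have hP : 0 < A * ((A + 1) ^ γ' + 1 + 1) := by positivity
  rcases le_or_gt 1 ε with h1 | h1
  · have := Real.one_le_rpow h1 hγ0.le
    nlinarith [hb x hxU]
  have mono : ∀ s, γ ≤ s → ε ^ s ≤ ε ^ γ := fun s hs =>
    Real.rpow_le_rpow_of_exponent_ge hε h1.le hs
  have hE : 0 < ε ^ γ := by positivity
  rcases le_or_gt (lastc x) (ε ^ (1 / (4 * d))) with h2 | h2
  · have a1 := near_flat hh hc hg hf1 hxU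
    have a2 := mono _ hγ4
    have a3 := mono 1 (by linarith)
    rw [Real.rpow_one] at a3
    nlinarith
  · set r : ℝ := ε ^ (1 / (2 * d)) with hr
    have hr0 : 0 < r := by positivity
    have hr1 : r ≤ 1 := Real.rpow_le_one hε.le h1.le (by positivity)
    have hb1 := far h ε r hε hr0 hr1 hh hc hb hg hf1 hf2 x hx hxl
    have hr2 : r ^ 2 = ε ^ (1 / d) := by
      rw [hr, ← Real.rpow_natCast, ← Real.rpow_mul hε.le]
      congr 1; push_cast; field_simp
    have hrn : r ^ (n+1) = ε ^ (1/2 : ℝ) := by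
      rw [hr, ← Real.rpow_natCast, ← Real.rpow_mul hε.le]
      congr 1; push_cast; rw [← hd]; field_simp
    have b1 : (A * ε + r ^ 2) ^ γ' ≤ (A + 1) ^ γ' * ε ^ γ := by
      have : ε ≤ ε ^ (1 / d) := by
        have := Real.rpow_le_rpow_of_exponent_ge hε h1.le
          (show 1 / d ≤ 1 by rw [div_le_one hd0]; exact hd1)
        rwa [Real.rpow_one] at this
      calc (A * ε + r ^ 2) ^ γ' ≤ ((A + 1) * ε ^ (1 / d)) ^ γ' := by
            apply Real.rpow_le_rpow (by positivity) _ hγ'.le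
            rw [hr2]; nlinarith
        _ = (A + 1) ^ γ' * ε ^ (γ' / d) := by
            rw [Real.mul_rpow (by positivity) (by positivity), ← Real.rpow_mul hε.le]
            congr 2; ring
        _ ≤ _ := by
            have := mono _ hγa
            gcongr
    have b2 : ε * (r ^ (n+1))⁻¹ ≤ ε ^ γ := by
      rw [hrn, ← Real.rpow_neg hε.le]
      nth_rewrite 1 [← Real.rpow_one ε]
      rw [← Real.rpow_add hε]
      exact mono _ (by linarith)
    have b3 : r / lastc x ≤ ε ^ γ := by
      rw [div_le_iff₀ hxl]
      have a2 := mono _ hγ4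
      have : r = ε ^ (1 / (4 * d)) * ε ^ (1 / (4 * d)) := by
        rw [hr, ← Real.rpow_add hε]; congr 1; field_simp; norm_num
      rw [this]
      have : 0 < ε ^ (1 / (4 * d)) := by positivity
      gcongr
    calc |h x| ≤ _ := hb1
      _ ≤ A * ((A + 1) ^ γ' * ε ^ γ + ε ^ γ + ε ^ γ) := by gcongr
      _ ≤ _ := by nlinarith

end NodalNeumann
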